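/- arXiv:2412.04066 — 7 statements merged into one kernel-verified Lean document; each statement's English description precedes it below -/
import Mathlib

section
/- Let d ≥ 1, let 0 ≤ k < d, and let F_1, F_2, … be an infinite sequence of families of closed balls in ℝ^d (closed Euclidean balls of arbitrary nonnegative radius). Suppose that every infinite heterochromatic sequence of balls of (F_i)_{i∈ℕ} contains k+2 balls that are all intersected by a single k-flat. Then there exists an index i and a finite set of k-flats in ℝ^d such that every ball of F_i intersects at least one of these k-flats. -/
/-- A `k`-flat in `ℝ^d`: a translate of a `k`-dimensional linear subspace, i.e. a
`k`-dimensional affine subspace. -/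
def IsKFlat {d : ℕ} (k : ℕ) (W : Set (EuclideanSpace ℝ (Fin d))) : Prop :=
  ∃ (p : EuclideanSpace ℝ (Fin d)) (U : Submodule ℝ (EuclideanSpace ℝ (Fin d))),
    Module.finrank ℝ U = k ∧ W = (fun u => p + u) '' (U : Set (EuclideanSpace ℝ (Fin d)))

/-- A closed Euclidean ball in `ℝ^d` of arbitrary nonnegative radius. -/
def IsClosedBall {d : ℕ} (A : Set (EuclideanSpace ℝ (Fin d))) : Prop :=
  ∃ (x : EuclideanSpace ℝ (Fin d)) (r : ℝ), 0 ≤ r ∧ A = Metric.closedBall x r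

open Filter Topology Metric

set_option linter.unusedSectionVars false

namespace BallFlat

variable {V : Type*} [NormedAddCommGroup V] [InnerProductSpace ℝ V] [FiniteDimensional ℝ V]

/-- The slice ball with centre `b.1` and radius `b.2` in the hyperplane `τ = 1`. -/
def Bl (τ : V →L[ℝ] ℝ) (b : V × ℝ) : Set V := {v | τ v = 1 ∧ ‖v - b.1‖ ≤ b.2}

/-- A family of balls is small if finitely many subspaces of dimension at most `k+1` meet
all of its members. -/
def Small (τ : V →L[ℝ] ℝ) (k : ℕ) (A : Set (V × ℝ)) : Prop :=
  ∃ S : Set (Submodule ℝ V), S.Finite ∧ (∀ L ∈ S, Module.finrank ℝ L ≤ k + 1) ∧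
    ∀ b ∈ A, ∃ L ∈ S, ∃ v ∈ L, v ∈ Bl τ b

/-- Projection along `E`. -/
noncomputable def Pr (E : Submodule ℝ V) : V →L[ℝ] V := Eᗮ.starProjection

lemma sub_Pr_mem (E : Submodule ℝ V) (v : V) : v - Pr E v ∈ E := by
  have h := Submodule.sub_starProjection_mem_orthogonal (K := Eᗮ) v
  rwa [Submodule.orthogonal_orthogonal] at h

lemma Pr_of_mem (E : Submodule ℝ V) {v : V} (hv : v ∈ E) : Pr E v = 0 := by
  unfold Pr
  rw [Submodule.starProjection_apply_eq_zero_iff]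
  simpa [Submodule.orthogonal_orthogonal] using hv

lemma norm_Pr_le (E : Submodule ℝ V) (v : V) : ‖Pr E v‖ ≤ ‖v‖ :=
  Submodule.norm_starProjection_apply_le _ _

lemma Pr_Pr {E G : Submodule ℝ V} (h : E ≤ G) (v : V) : Pr G (Pr E v) = Pr G v := by
  have := Pr_of_mem G (h (sub_Pr_mem E v))
  rw [map_sub, sub_eq_zero] at this
  exact this.symm

lemma Pr_mono {E G : Submodule ℝ V} (h : E ≤ G) (v : V) : ‖Pr G v‖ ≤ ‖Pr E v‖ := by
  rw [← Pr_Pr h]; exact norm_Pr_le _ _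

lemma finrank_sup_span (E : Submodule ℝ V) (n : V) {k : ℕ} (h : Module.finrank ℝ E ≤ k) :
    Module.finrank ℝ (E ⊔ Submodule.span ℝ {n} : Submodule ℝ V) ≤ k + 1 := by
  have h1 := Submodule.finrank_add_le_finrank_add_finrank E (Submodule.span ℝ {n})
  have h2 := finrank_span_le_card (R := ℝ) ({n} : Set V)
  simp at h2
  omega

lemma Small.mono {τ : V →L[ℝ] ℝ} {k : ℕ} {A B : Set (V × ℝ)} (h : Small τ k B) (hAB : A ⊆ B) :
    Small τ k A := by
  obtain ⟨S, h1, h2, h3⟩ := h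
  exact ⟨S, h1, h2, fun b hb => h3 b (hAB hb)⟩

lemma Small.union {τ : V →L[ℝ] ℝ} {k : ℕ} {A B : Set (V × ℝ)} (h : Small τ k A)
    (h' : Small τ k B) : Small τ k (A ∪ B) := by
  obtain ⟨S, h1, h2, h3⟩ := h
  obtain ⟨T, g1, g2, g3⟩ := h'
  refine ⟨S ∪ T, h1.union g1, ?_, ?_⟩
  · rintro L (hL | hL)
    · exact h2 L hL
    · exact g2 L hL
  · rintro b (hb | hb)
    · obtain ⟨L, hL, h⟩ := h3 b hb
      exact ⟨L, Or.inl hL, h⟩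
    · obtain ⟨L, hL, h⟩ := g3 b hb
      exact ⟨L, Or.inr hL, h⟩

lemma small_empty (τ : V →L[ℝ] ℝ) (k : ℕ) : Small τ k ∅ :=
  ⟨∅, Set.finite_empty, by simp, by simp⟩

lemma smallC (τ : V →L[ℝ] ℝ) {k : ℕ} (E : Submodule ℝ V) (hE : Module.finrank ℝ E ≤ k + 1) :
    Small τ k {b | ∃ v ∈ E, v ∈ Bl τ b} :=
  ⟨{E}, Set.finite_singleton _, by simpa using hE, by simp⟩

/-- Balls which are seen from `E` under a not too small angle. -/
lemma smallA (τ : V →L[ℝ] ℝ) {k : ℕ} (E : Submodule ℝ V) (hE : Module.finrank ℝ E ≤ k)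
    (h : V) (hh : h ∈ E) (hτ : τ h = 1) {ε : ℝ} (hε : 0 < ε) :
    Small τ k {b | τ b.1 = 1 ∧ ε * ‖Pr E b.1‖ ≤ b.2} := by
  set C : ℝ := 1 + ‖τ‖ * ‖h‖ with hC
  have hC0 : 0 < C := by positivity
  obtain ⟨t, ht, htf, hcov⟩ := (isCompact_closedBall (0 : V) 1).finite_cover_balls
    (div_pos hε hC0)
  refine ⟨(fun n => E ⊔ Submodule.span ℝ {n}) '' t, htf.image _, ?_, ?_⟩
  · rintro _ ⟨n, -, rfl⟩
    exact finrank_sup_span E n hE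
  rintro ⟨c, r⟩ ⟨hc, hr⟩
  simp only at hc hr
  set q := Pr E c with hq
  have hmem : ‖q‖⁻¹ • q ∈ closedBall (0 : V) 1 := by
    rw [mem_closedBall_zero_iff, norm_smul, norm_inv, norm_norm]
    exact inv_mul_le_one
  obtain ⟨n, hn, hqn⟩ := Set.mem_iUnion₂.1 (hcov hmem)
  rw [mem_ball, dist_eq_norm] at hqn
  set w := ‖q‖ • n - q with hw
  have hwn : ‖w‖ ≤ ε / C * ‖q‖ := by
    by_cases h0 : q = 0
    · simp [hw, h0]
    have h0' : ‖q‖ ≠ 0 := by simpa using h0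
    have : w = -(‖q‖ • (‖q‖⁻¹ • q - n)) := by
      rw [smul_sub, smul_smul, mul_inv_cancel₀ h0', one_smul, hw]; abel
    rw [this, norm_neg, norm_smul, norm_norm, mul_comm]
    gcongr
  refine ⟨_, ⟨n, hn, rfl⟩, c + (w - τ w • h), ?_, ?_, ?_⟩
  · have : c + (w - τ w • h) = (c - q - τ w • h) + ‖q‖ • n := by rw [hw]; abel
    rw [this]
    refine Submodule.add_mem_sup (E.sub_mem (sub_Pr_mem E c) (E.smul_mem _ hh)) ?_
    exact Submodule.smul_mem _ _ (Submodule.mem_span_singleton_self n)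
  · simp [hc, hτ]
  · simp only [add_sub_cancel_left]
    have h1 : ‖w - τ w • h‖ ≤ ‖w‖ + ‖τ‖ * ‖w‖ * ‖h‖ := by
      refine (norm_sub_le _ _).trans ?_
      rw [norm_smul]
      gcongr
      exact τ.le_opNorm w
    have h2 : ‖w‖ + ‖τ‖ * ‖w‖ * ‖h‖ = C * ‖w‖ := by rw [hC]; ring
    have h3 : C * ‖w‖ ≤ C * (ε / C * ‖q‖) := by gcongr
    have h4 : C * (ε / C * ‖q‖) = ε * ‖q‖ := by field_simp
    linarith

/-- Balls of radius bounded below whose shadow meets a bounded region. -/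
lemma smallB (τ : V →L[ℝ] ℝ) {k : ℕ} (E : Submodule ℝ V) (hE : Module.finrank ℝ E ≤ k)
    (hker : ∀ v ∈ E, τ v = 0) (q₀ : V) (hq₀ : τ q₀ = 1) {ε M : ℝ} (hε : 0 < ε) (hM : 0 ≤ M) :
    Small τ k {b | τ b.1 = 1 ∧ ε ≤ b.2 ∧ ‖Pr E b.1 - q₀‖ ≤ b.2 + M} := by
  have hcomp : IsCompact (closedBall q₀ (M + ε) ∩ {n | τ n = 1}) :=
    (isCompact_closedBall _ _).inter_right (isClosed_eq τ.continuous continuous_const)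
  obtain ⟨t, ht, htf, hcov⟩ := hcomp.finite_cover_balls hε
  refine ⟨(fun n => E ⊔ Submodule.span ℝ {n}) '' t, htf.image _, ?_, ?_⟩
  · rintro _ ⟨n, -, rfl⟩
    exact finrank_sup_span E n hE
  rintro ⟨c, r⟩ ⟨hc, hr, hd⟩
  simp only at hc hr hd
  set q := Pr E c with hq
  have hτq : τ q = 1 := by
    have := hker _ (sub_Pr_mem E c)
    rw [map_sub, hc] at this
    linarith
  have hz : ∃ z, τ z = 1 ∧ ‖z - q₀‖ ≤ M + ε ∧ ‖z - q‖ ≤ r - ε := by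
    by_cases hle : ‖q - q₀‖ ≤ M + ε
    · exact ⟨q, hτq, hle, by simpa using hr⟩
    push Not at hle
    have hpos : 0 < ‖q - q₀‖ := by linarith
    set θ := (M + ε) / ‖q - q₀‖ with hθ
    have hθ0 : 0 ≤ θ := by positivity
    have hθ1 : θ ≤ 1 := by rw [hθ, div_le_one hpos]; exact hle.le
    have hθm : θ * ‖q - q₀‖ = M + ε := by rw [hθ]; field_simp
    refine ⟨q₀ + θ • (q - q₀), by simp [hq₀, hτq], ?_, ?_⟩
    · rw [add_sub_cancel_left, norm_smul, Real.norm_of_nonneg hθ0, hθm]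
    · have : q₀ + θ • (q - q₀) - q = -((1 - θ) • (q - q₀)) := by module
      rw [this, norm_neg, norm_smul, Real.norm_of_nonneg (by linarith)]
      linarith
  obtain ⟨z, hz1, hz2, hz3⟩ := hz
  obtain ⟨n, hn, hzn⟩ := Set.mem_iUnion₂.1
    (hcov (show z ∈ _ from ⟨by rw [mem_closedBall, dist_eq_norm]; exact hz2, hz1⟩))
  rw [mem_ball, dist_eq_norm] at hzn
  refine ⟨_, ⟨n, hn, rfl⟩, c + (n - q), ?_, ?_, ?_⟩
  · have : c + (n - q) = (c - q) + n := by abel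
    rw [this]
    exact Submodule.add_mem_sup (sub_Pr_mem E c) (Submodule.mem_span_singleton_self n)
  · have : τ n = 1 := (ht hn).2
    simp [hc, this, hτq]
  · simp only [add_sub_cancel_left]
    have : n - q = (z - q) - (z - n) := by abel
    rw [this]
    refine (norm_sub_le _ _).trans ?_
    linarith

/-- Any choice of points of the balls is linearly independent modulo `E`. -/
def Ind (τ : V →L[ℝ] ℝ) (E : Submodule ℝ V) (l : List (V × ℝ)) : Prop :=
  ∀ v : Fin l.length → V, (∀ i, v i ∈ Bl τ (l.get i)) →
    LinearIndependent ℝ (fun i => Pr E (v i))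

lemma isCompact_Bl (τ : V →L[ℝ] ℝ) (b : V × ℝ) : IsCompact (Bl τ b) := by
  have : Bl τ b = closedBall b.1 b.2 ∩ {n | τ n = 1} := by
    ext v; simp [Bl, dist_eq_norm, and_comm]
  rw [this]
  exact (isCompact_closedBall _ _).inter_right (isClosed_eq τ.continuous continuous_const)

lemma step (τ : V →L[ℝ] ℝ) (U : Ultrafilter (V × ℝ)) (hU0 : ∀ᶠ b in (U : Filter (V × ℝ)), 0 ≤ b.2)
    (E : Submodule ℝ V) (e : V)
    (he : Tendsto (fun b : V × ℝ => ‖Pr E b.1‖⁻¹ • Pr E b.1) U (𝓝 e))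
    (hr : ∀ ε > 0, ∀ᶠ b in (U : Filter (V × ℝ)), b.2 < ε * ‖Pr E b.1‖)
    (l : List (V × ℝ)) (hl : Ind τ (E ⊔ Submodule.span ℝ {e}) l) :
    ∀ᶠ b in (U : Filter (V × ℝ)), Ind τ E (b :: l) := by
  have hpos : ∀ᶠ b in (U : Filter (V × ℝ)), 0 < ‖Pr E b.1‖ := by
    filter_upwards [hU0, hr 1 one_pos] with b h1 h2
    linarith
  have hnorm : ‖e‖ = 1 := by
    have h1 := he.norm
    have h2 : Tendsto (fun _ : V × ℝ => (1 : ℝ)) U (𝓝 1) := tendsto_const_nhds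
    refine tendsto_nhds_unique (h1.congr' ?_) h2
    filter_upwards [hpos] with b hb
    rw [norm_smul, norm_inv, norm_norm, inv_mul_cancel₀ hb.ne']
  have he0 : e ≠ 0 := by rintro rfl; simp at hnorm
  set E' := E ⊔ Submodule.span ℝ {e} with hE'
  have hEE' : E ≤ E' := le_sup_left
  have heE' : e ∈ E' := Submodule.mem_sup_right (Submodule.mem_span_singleton_self e)
  set O : Set (V × (Fin l.length → V)) :=
    {p | LinearIndependent ℝ (Fin.cons p.1 (fun i => Pr E (p.2 i)) : Fin (l.length + 1) → V)}
    with hO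
  have hOo : IsOpen O := by
    have hc : Continuous (fun p : V × (Fin l.length → V) =>
        (Fin.cons p.1 (fun i => Pr E (p.2 i)) : Fin (l.length + 1) → V)) := by
      refine continuous_pi fun i => ?_
      refine Fin.cases ?_ (fun i => ?_) i
      · simpa using continuous_fst
      · simp only [Fin.cons_succ]
        fun_prop
    exact isOpen_setOfPred_linearIndependent.preimage hc
  have hsub : ({e} : Set V) ×ˢ (Set.univ.pi fun i : Fin l.length => Bl τ (l.get i)) ⊆ O := by
    rintro ⟨x, v⟩ ⟨hx, hv⟩
    rw [Set.mem_singleton_iff] at hx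
    simp only at hx hv
    subst hx
    have hli := hl v (fun i => hv i (Set.mem_univ i))
    have hcomp : (fun i => Pr E' (v i)) = (Pr E' : V →ₗ[ℝ] V) ∘ (fun i => Pr E (v i)) := by
      ext i : 1
      exact (Pr_Pr hEE' (v i)).symm
    have hli2 : LinearIndependent ℝ (fun i => Pr E (v i)) := by
      rw [hcomp] at hli
      exact hli.of_comp _
    rw [hO, Set.mem_ofPred_eq, linearIndependent_finCons]
    refine ⟨hli2, fun hmem => he0 ?_⟩
    obtain ⟨a, ha⟩ := (Submodule.mem_span_range_iff_exists_fun ℝ).1 hmem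
    have h0 : ∑ i, a i • Pr E' (v i) = 0 := by
      rw [← Pr_of_mem E' heE']
      conv_rhs => rw [show x = _ from ha.symm]
      simp [map_sum, Pr_Pr hEE']
    have := Fintype.linearIndependent_iff.1 hli a h0
    rw [show x = _ from ha.symm]
    simp [this]
  obtain ⟨u, w, hu, hw, heu, hKw, huw⟩ := generalized_tube_lemma isCompact_singleton
    (isCompact_univ_pi fun i : Fin l.length => isCompact_Bl τ (l.get i)) hOo hsub
  obtain ⟨η, hη, hball⟩ := Metric.isOpen_iff.1 hu e (heu rfl)
  have hη2 : 0 < η / 2 := by positivity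
  filter_upwards [hpos, hr _ hη2, he (ball_mem_nhds e hη2)] with b h1 h2 h3
  intro v hv
  have h3' : ‖‖Pr E b.1‖⁻¹ • Pr E b.1 - e‖ < η / 2 := by
    simpa [dist_eq_norm] using h3
  have hv0 := (hv 0).2
  simp only [List.get_cons_zero] at hv0
  have hin : ‖Pr E b.1‖⁻¹ • Pr E (v 0) ∈ u := by
    apply hball
    rw [mem_ball, dist_eq_norm]
    have : ‖Pr E b.1‖⁻¹ • Pr E (v 0) - e
        = ‖Pr E b.1‖⁻¹ • Pr E (v 0 - b.1) + (‖Pr E b.1‖⁻¹ • Pr E b.1 - e) := by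
      rw [map_sub, smul_sub]; abel
    rw [this]
    refine (norm_add_le _ _).trans_lt ?_
    have h4 : ‖‖Pr E b.1‖⁻¹ • Pr E (v 0 - b.1)‖ < η / 2 := by
      rw [norm_smul, norm_inv, norm_norm, inv_mul_lt_iff₀ h1]
      have := norm_Pr_le E (v 0 - b.1)
      linarith
    linarith
  have hmem : (‖Pr E b.1‖⁻¹ • Pr E (v 0), fun i : Fin l.length => v i.succ) ∈ O := by
    apply huw
    refine ⟨hin, hKw fun i _ => ?_⟩
    simpa using hv i.succ
  rw [hO, Set.mem_ofPred_eq, linearIndependent_finCons] at hmem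
  have hfin : LinearIndependent ℝ
      (Fin.cons (Pr E (v 0)) (fun i : Fin l.length => Pr E (v i.succ)) : Fin (l.length + 1) → V) := by
    rw [linearIndependent_finCons]
    exact ⟨hmem.1, fun h => hmem.2 (Submodule.smul_mem _ _ h)⟩
  have heq : (fun i : Fin (l.length + 1) => Pr E (v i))
      = Fin.cons (Pr E (v 0)) (fun i : Fin l.length => Pr E (v i.succ)) := by
    funext i
    refine Fin.cases ?_ (fun i => ?_) i
    · rfl
    · rfl
  exact heq ▸ hfin

lemma mem_of_Pr_eq_zero (E : Submodule ℝ V) {v : V} (h : Pr E v = 0) : v ∈ E := by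
  simpa [h] using sub_Pr_mem E v

lemma Ind_single (τ : V →L[ℝ] ℝ) (E : Submodule ℝ V) (b : V × ℝ) (h : ∀ v ∈ Bl τ b, v ∉ E) :
    Ind τ E [b] := by
  intro v hv
  have h0 : v 0 ∉ E := h _ (hv 0)
  have : LinearIndependent ℝ (fun i : Fin 1 => Pr E (v i)) := by
    rw [Fintype.linearIndependent_iff]
    intro g hg i
    rw [Fin.sum_univ_one] at hg
    obtain rfl : i = 0 := Subsingleton.elim _ _
    rcases smul_eq_zero.1 hg with h1 | h1
    · exact h1
    · exact absurd (mem_of_Pr_eq_zero E h1) h0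
  exact this

lemma Ind_pair (τ : V →L[ℝ] ℝ) (E : Submodule ℝ V) (hker : ∀ v ∈ E, τ v = 0) (b b₀ : V × ℝ)
    (h : ∀ v ∈ Bl τ b, ∀ w ∈ Bl τ b₀, v - w ∉ E) :
    Ind τ E [b, b₀] := by
  intro v hv
  have hv0 : v 0 ∈ Bl τ b := hv 0
  have hv1 : v 1 ∈ Bl τ b₀ := hv 1
  have h0 := h _ hv0 _ hv1
  have : LinearIndependent ℝ (fun i : Fin 2 => Pr E (v i)) := by
    rw [Fintype.linearIndependent_iff]
    intro g hg
    rw [Fin.sum_univ_two, ← map_smul, ← map_smul, ← map_add] at hg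
    have hm := mem_of_Pr_eq_zero E hg
    have ht := hker _ hm
    have e0 : τ (v 0) = 1 := hv0.1
    have e1 : τ (v 1) = 1 := hv1.1
    change τ (g 0 • v 0 + g 1 • v 1) = 0 at ht
    rw [map_add, map_smul, map_smul, e0, e1] at ht
    simp only [smul_eq_mul, mul_one] at ht
    have hg1 : g 1 = - g 0 := by linarith
    have hm2 : g 0 • (v 0 - v 1) ∈ E := by
      have : g 0 • (v 0 - v 1) = g 0 • v 0 + g 1 • v 1 := by rw [hg1]; module
      rw [this]; exact hm
    have hg0 : g 0 = 0 := by
      by_contra hne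
      exact h0 ((E.smul_mem_iff hne).1 hm2)
    intro i
    fin_cases i
    · exact hg0
    · simp [hg1, hg0]
  exact this

lemma final (τ : V →L[ℝ] ℝ) {k : ℕ} (U : Ultrafilter (V × ℝ))
    (hU : ∀ᶠ b in (U : Filter (V × ℝ)), τ b.1 = 1 ∧ 0 ≤ b.2)
    (hsm : ∀ A, Small τ k A → ∀ᶠ b in (U : Filter (V × ℝ)), b ∉ A)
    (E : Submodule ℝ V) (hE : Module.finrank ℝ E ≤ k) (e : V)
    (he : Tendsto (fun b : V × ℝ => ‖Pr E b.1‖⁻¹ • Pr E b.1) U (𝓝 e)) :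
    ∀ᶠ b₀ in (U : Filter (V × ℝ)), ∀ᶠ b in (U : Filter (V × ℝ)), Ind τ E [b, b₀] := by
  by_cases hker : ∀ v ∈ E, τ v = 0
  · by_contra hcon
    have hA : ∀ᶠ b₀ in (U : Filter (V × ℝ)), ∀ᶠ b in (U : Filter (V × ℝ)),
        ‖Pr E b.1 - Pr E b₀.1‖ ≤ b.2 + b₀.2 := by
      rw [← Ultrafilter.eventually_not] at hcon
      filter_upwards [hcon] with b₀ hb₀
      rw [← Ultrafilter.eventually_not] at hb₀
      filter_upwards [hb₀] with b hb
      by_contra hlt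
      push Not at hlt
      refine hb (Ind_pair τ E hker b b₀ fun v hv w hw hvw => ?_)
      have h1 : Pr E v = Pr E w := by
        have := Pr_of_mem E hvw
        rwa [map_sub, sub_eq_zero] at this
      have h2 : Pr E b.1 - Pr E b₀.1 = Pr E (w - b₀.1) - Pr E (v - b.1) := by
        rw [map_sub, map_sub, h1]; abel
      rw [h2] at hlt
      have h3 := norm_sub_le (Pr E (w - b₀.1)) (Pr E (v - b.1))
      have h4 := norm_Pr_le E (w - b₀.1)
      have h5 := norm_Pr_le E (v - b.1)
      have h6 := hv.2
      have h7 := hw.2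
      linarith
    have hτ : ∀ c : V, τ c = 1 → τ (Pr E c) = 1 := by
      intro c hc
      have := hker _ (sub_Pr_mem E c)
      rw [map_sub, hc] at this
      linarith
    obtain ⟨b₀, hb₀, hb₀U⟩ := (hA.and hU).exists
    by_cases hr : ∀ ε > 0, ∀ᶠ b in (U : Filter (V × ℝ)), b.2 < ε
    · -- the projected centres converge
      have hbd : ∀ᶠ b in (U : Filter (V × ℝ)),
          Pr E b.1 ∈ closedBall (Pr E b₀.1) (1 + b₀.2) := by
        filter_upwards [hb₀, hr 1 one_pos] with b h1 h2
        rw [mem_closedBall, dist_eq_norm]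
        linarith
      obtain ⟨q, -, hq⟩ := (isCompact_closedBall (Pr E b₀.1) (1 + b₀.2)).ultrafilter_le_nhds
        (U.map fun b => Pr E b.1) (by
          rw [le_principal_iff]; exact hbd)
      have hq' : Tendsto (fun b : V × ℝ => Pr E b.1) U (𝓝 q) := hq
      have hτq : τ q = 1 := by
        have h1 : Tendsto (fun b : V × ℝ => τ (Pr E b.1)) U (𝓝 (τ q)) :=
          (τ.continuous.tendsto q).comp hq'
        refine tendsto_nhds_unique (h1.congr' ?_) tendsto_const_nhds
        filter_upwards [hU] with b hb
        exact hτ _ hb.1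
      have hbad := hsm _ (smallC τ (E ⊔ Submodule.span ℝ {q}) (finrank_sup_span E q hE))
      obtain ⟨b₁, h1, h2, h3⟩ := (hA.and (hU.and hbad)).exists
      apply h3
      refine ⟨b₁.1 + (q - Pr E b₁.1), ?_, ?_, ?_⟩
      · have : b₁.1 + (q - Pr E b₁.1) = (b₁.1 - Pr E b₁.1) + q := by abel
        rw [this]
        exact Submodule.add_mem_sup (sub_Pr_mem E _) (Submodule.mem_span_singleton_self q)
      · simp [h2.1, hτq, hτ]
      · simp only [add_sub_cancel_left]
        refine le_of_forall_pos_le_add fun ε hε => ?_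
        refine le_of_tendsto ((hq'.sub_const (Pr E b₁.1)).norm) ?_
        filter_upwards [h1, hr ε hε] with b g1 g2
        linarith
    · push Not at hr
      obtain ⟨ε, hε, hr⟩ := hr
      rw [← Ultrafilter.frequently_iff_eventually] at hr
      have hbad := hsm _ (smallB τ E hE hker (Pr E b₀.1) (hτ _ hb₀U.1) hε hb₀U.2)
      obtain ⟨b, g1, g2, g3, g4⟩ := (hr.and_eventually (hb₀.and (hU.and hbad))).exists
      exact g4 ⟨g3.1, g1, g2⟩
  · push Not at hker
    obtain ⟨h, hh, hτ⟩ := hker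
    have hr : ∀ ε > 0, ∀ᶠ b in (U : Filter (V × ℝ)), b.2 < ε * ‖Pr E b.1‖ := by
      intro ε hε
      have := hsm _ (smallA τ E hE ((τ h)⁻¹ • h) (E.smul_mem _ hh) (by simp [hτ]) hε)
      filter_upwards [this, hU] with b h1 h2
      by_contra h3
      push Not at h3
      exact h1 ⟨h2.1, h3⟩
    have hbad := hsm _ (smallC τ (E ⊔ Submodule.span ℝ {e}) (finrank_sup_span E e hE))
    filter_upwards [hbad] with b₀ hb₀
    refine step τ U (hU.mono fun b hb => hb.2) E e he hr [b₀] ?_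
    exact Ind_single τ _ b₀ fun v hv hvE => hb₀ ⟨v, hvE, hv⟩

lemma Ind_contra (τ : V →L[ℝ] ℝ) {k : ℕ} (E L : Submodule ℝ V) (l : List (V × ℝ))
    (hl : l.length = k + 2) (hI : Ind τ E l) (hL : Module.finrank ℝ L ≤ k + 1)
    (h : ∀ b ∈ l, ∃ v ∈ L, v ∈ Bl τ b) : False := by
  have h' : ∀ i : Fin l.length, ∃ v ∈ L, v ∈ Bl τ (l.get i) := fun i => h _ (l.get_mem i)
  choose v hvL hv using h'
  have h1 : LinearIndependent ℝ v := (hI v hv).of_comp (Pr E : V →ₗ[ℝ] V)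
  have h2 : LinearIndependent ℝ (fun i => (⟨v i, hvL i⟩ : L)) :=
    LinearIndependent.of_comp L.subtype h1
  have h3 := h2.fintype_card_le_finrank
  simp at h3
  omega

lemma exists_seq {β : Type*} (U : Filter β) (G : ℕ → Set β)
    (hG : ∀ Q : β → Prop, (∀ᶠ b in U, Q b) → ∀ N, ∃ i, N ≤ i ∧ ∃ b ∈ G i, Q b)
    (T : List β → Prop) (T0 : T []) (T1 : ∀ s, T s → ∀ᶠ b in U, T (b :: s)) :
    ∃ (c : ℕ → β) (idx : ℕ → ℕ), StrictMono idx ∧ (∀ j, c j ∈ G (idx j)) ∧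
      ∀ s : List ℕ, s.Pairwise (· > ·) → T (s.map c) := by
  let St := {p : List β × ℕ // ∀ s, s.Sublist p.1 → T s}
  have hnext : ∀ p : St, ∃ (q : St) (b : β), q.1.1 = b :: p.1.1 ∧ p.1.2 < q.1.2 ∧ b ∈ G q.1.2 := by
    rintro ⟨⟨l, N⟩, hl⟩
    have hev : ∀ᶠ b in U, ∀ s ∈ {s | s ∈ l.sublists}, T (b :: s) := by
      rw [eventually_all_finite (List.finite_toSet _)]
      intro s hs
      exact T1 s (hl s (List.mem_sublists.1 hs))
    obtain ⟨i, hi, b, hb, hQ⟩ := hG _ hev (N + 1)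
    refine ⟨⟨⟨b :: l, i⟩, ?_⟩, b, rfl, hi, hb⟩
    intro s hs
    rcases List.sublist_cons_iff.1 hs with h | ⟨r, rfl, h⟩
    · exact hl s h
    · exact hQ r (List.mem_sublists.2 h)
  choose nx hd h1 h2 h3 using hnext
  let st : ℕ → St := fun n => Nat.rec ⟨([], 0), by
    intro s hs
    rw [List.sublist_nil.1 hs]; exact T0⟩ (fun _ p => nx p) n
  have hst : ∀ n, st (n + 1) = nx (st n) := fun n => rfl
  refine ⟨fun n => hd (st n), fun n => (st (n + 1)).1.2, ?_, ?_, ?_⟩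
  · refine strictMono_nat_of_lt_succ fun n => ?_
    exact h2 _
  · intro j
    exact h3 _
  · have key : ∀ n, ∀ s : List ℕ, s.Pairwise (· > ·) → (∀ a ∈ s, a < n) →
        (s.map fun n => hd (st n)).Sublist (st n).1.1 := by
      intro n
      induction n with
      | zero =>
        intro s _ hs
        have : s = [] := List.eq_nil_iff_forall_not_mem.2 fun a ha => by simpa using hs a ha
        simp [this]
      | succ n ih =>
        intro s hp hs
        rw [hst n, h1]
        cases s with
        | nil => simp
        | cons a s =>
          rw [List.pairwise_cons] at hp
          have han := hs a (by simp)
          by_cases h : a = n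
          · subst h
            rw [List.map_cons]
            exact (ih s hp.2 fun x hx => hp.1 x hx).cons_cons _
          · refine (ih (a :: s) (List.pairwise_cons.2 hp) ?_).cons _
            intro x hx
            rcases List.mem_cons.1 hx with rfl | hx
            · omega
            · have := hp.1 x hx
              omega
    intro s hs
    have hb : ∃ n, ∀ a ∈ s, a < n := ⟨s.sum + 1, fun a ha => by
      have := List.le_sum_of_mem ha
      omega⟩
    obtain ⟨n, hn⟩ := hb
    exact (st n).2 _ (key n s hs hn)

theorem main_abs (τ : V →L[ℝ] ℝ) (t : V) (ht : τ t = 1) (k : ℕ) (G : ℕ → Set (V × ℝ))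
    (hGv : ∀ i, ∀ b ∈ G i, τ b.1 = 1 ∧ 0 ≤ b.2)
    (hns : ∀ i, ¬ Small τ k (G i)) :
    ∃ (c : ℕ → V × ℝ) (idx : ℕ → ℕ), StrictMono idx ∧ (∀ j, c j ∈ G (idx j)) ∧
      ∀ s : Finset ℕ, s.card = k + 2 → ∀ L : Submodule ℝ V, Module.finrank ℝ L ≤ k + 1 →
        ¬ ∀ j ∈ s, ∃ v ∈ L, v ∈ Bl τ (c j) := by
  let 𝓕 : Filter (V × ℝ) := Filter.comk (fun A => ∃ N, ∀ i ≥ N, Small τ k (A ∩ G i))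
    ⟨0, fun i _ => by simpa using small_empty τ k⟩
    (fun A ⟨N, hN⟩ B hBA => ⟨N, fun i hi => (hN i hi).mono (by gcongr)⟩)
    (fun A ⟨N, hN⟩ B ⟨M, hM⟩ => ⟨max N M, fun i hi => by
      rw [Set.union_inter_distrib_right]
      exact (hN i (le_of_max_le_left hi)).union (hM i (le_of_max_le_right hi))⟩)
  have h𝓕 : ∀ A : Set (V × ℝ), A ∈ 𝓕 ↔ ∃ N, ∀ i ≥ N, Small τ k (Aᶜ ∩ G i) := fun A => Iff.rfl
  have hne : 𝓕.NeBot := by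
    rw [neBot_iff, Ne, ← empty_mem_iff_bot, h𝓕]
    rintro ⟨N, hN⟩
    exact hns N (by simpa using hN N le_rfl)
  let U : Ultrafilter (V × ℝ) := Ultrafilter.of 𝓕
  have hUle : (U : Filter (V × ℝ)) ≤ 𝓕 := Ultrafilter.of_le 𝓕
  have hU : ∀ᶠ b in (U : Filter (V × ℝ)), τ b.1 = 1 ∧ 0 ≤ b.2 := by
    apply hUle
    rw [h𝓕]
    refine ⟨0, fun i _ => (small_empty τ k).mono ?_⟩
    rintro b ⟨h1, h2⟩
    exact h1 (hGv i b h2)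
  have hsm : ∀ A, Small τ k A → ∀ᶠ b in (U : Filter (V × ℝ)), b ∉ A := by
    intro A hA
    apply hUle
    rw [h𝓕]
    refine ⟨0, fun i _ => hA.mono ?_⟩
    rintro b ⟨h1, h2⟩
    by_contra h3
    exact h1 h3
  have hUG : ∀ Q : V × ℝ → Prop, (∀ᶠ b in (U : Filter (V × ℝ)), Q b) →
      ∀ N, ∃ i, N ≤ i ∧ ∃ b ∈ G i, Q b := by
    intro Q hQ N
    by_contra hcon
    push Not at hcon
    have : ∀ᶠ b in (U : Filter (V × ℝ)), ¬ Q b := by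
      apply hUle
      rw [h𝓕]
      refine ⟨N, fun i hi => (small_empty τ k).mono ?_⟩
      rintro b ⟨h1, h2⟩
      exact h1 (hcon i hi b h2)
    obtain ⟨b, h1, h2⟩ := (hQ.and this).exists
    exact h2 h1
  have hlim : ∀ E : Submodule ℝ V, ∃ e : V,
      Tendsto (fun b : V × ℝ => ‖Pr E b.1‖⁻¹ • Pr E b.1) U (𝓝 e) := by
    intro E
    obtain ⟨q, -, hq⟩ := (isCompact_closedBall (0 : V) 1).ultrafilter_le_nhds
      (U.map fun b => ‖Pr E b.1‖⁻¹ • Pr E b.1) (by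
        rw [le_principal_iff]
        refine Filter.Eventually.of_forall (f := (U : Filter (V × ℝ))) fun b => ?_
        show _ ∈ closedBall (0 : V) 1
        rw [mem_closedBall_zero_iff, norm_smul, norm_inv, norm_norm]
        exact inv_mul_le_one)
    exact ⟨q, hq⟩
  choose e he using hlim
  obtain ⟨E, hE0, hES⟩ : ∃ E : ℕ → Submodule ℝ V, E 0 = ⊥ ∧
      ∀ n, E (n + 1) = E n ⊔ Submodule.span ℝ {e (E n)} :=
    ⟨fun n => Nat.rec (motive := fun _ => Submodule ℝ V) ⊥
      (fun _ E => E ⊔ Submodule.span ℝ {e E}) n, rfl, fun _ => rfl⟩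
  have hEr : ∀ n, Module.finrank ℝ (E n) ≤ n := by
    intro n
    induction n with
    | zero => rw [hE0]; simp
    | succ n ih => rw [hES]; exact finrank_sup_span _ _ ih
  have hstep : ∀ j < k, ∀ l, Ind τ (E (j + 1)) l →
      ∀ᶠ b in (U : Filter (V × ℝ)), Ind τ (E j) (b :: l) := by
    intro j hj l hl
    rw [hES] at hl
    refine step τ U (hU.mono fun b hb => hb.2) (E j) (e (E j)) (he _) ?_ l hl
    intro ε hε
    have hfr := finrank_sup_span (E j) t (hEr j)
    have := hsm _ (smallA (k := k) τ (E j ⊔ Submodule.span ℝ {t}) (by omega) t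
      (Submodule.mem_sup_right (Submodule.mem_span_singleton_self t)) ht hε)
    filter_upwards [this, hU] with b h1 h2
    by_contra h3
    push Not at h3
    refine h1 ⟨h2.1, le_trans ?_ h3⟩
    gcongr
    exact Pr_mono le_sup_left _
  have hfinal := final τ U hU hsm (E k) (hEr k) (e (E k)) (he _)
  let T : List (V × ℝ) → Prop := fun l =>
    (l.length = 1 → ∀ b₀ ∈ l, ∀ᶠ b in (U : Filter (V × ℝ)), Ind τ (E k) [b, b₀]) ∧
    (∀ j, l.length + j = k + 2 → 2 ≤ l.length → Ind τ (E j) l)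
  obtain ⟨c, idx, h1, h2, h3⟩ := exists_seq (U : Filter (V × ℝ)) G hUG T
    ⟨by simp, by simp⟩ (by
      intro s hs
      rcases Nat.lt_or_ge s.length 2 with hlt | hge
      · match s, hs, hlt with
        | [], _, _ =>
          filter_upwards [hfinal] with b hb
          exact ⟨by simpa using hb, by simp⟩
        | [b₀], hs, _ =>
          filter_upwards [hs.1 rfl b₀ (by simp)] with b hb
          refine ⟨by simp, fun j hj _ => ?_⟩
          simp only [List.length_cons, List.length_nil] at hj
          obtain rfl : j = k := by omega
          exact hb
      · by_cases hle : s.length ≤ k + 1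
        · have hI := hs.2 (k + 1 - s.length + 1) (by omega) hge
          filter_upwards [hstep _ (by omega) s hI] with b hb
          refine ⟨fun h => by simp only [List.length_cons] at h; omega, fun j hj _ => ?_⟩
          simp only [List.length_cons] at hj
          obtain rfl : j = k + 1 - s.length := by omega
          exact hb
        · refine Filter.Eventually.of_forall fun b => ⟨fun h => ?_, fun j hj _ => ?_⟩
          · simp only [List.length_cons] at h; omega
          · simp only [List.length_cons] at hj; omega)
  refine ⟨c, idx, h1, h2, fun s hs L hL hcon => ?_⟩
  have hlen : ((s.sort (· ≥ ·)).map c).length = k + 2 := by simp [hs]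
  have hT := (h3 (s.sort (· ≥ ·)) (Finset.sortedGT_sort s).pairwise).2 0 (by omega) (by omega)
  refine Ind_contra τ (E 0) L _ hlen hT hL ?_
  intro b hb
  obtain ⟨j, hj, rfl⟩ := List.mem_map.1 hb
  exact hcon j (by simpa using hj)

end BallFlat

namespace BallFlat

lemma exists_extend {X : Type*} [AddCommGroup X] [Module ℝ X] [FiniteDimensional ℝ X]
    (n : ℕ) : ∀ (U : Submodule ℝ X), Module.finrank ℝ U + n ≤ Module.finrank ℝ X →
      ∃ U' : Submodule ℝ X, U ≤ U' ∧ Module.finrank ℝ U' = Module.finrank ℝ U + n := by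
  induction n with
  | zero => exact fun U _ => ⟨U, le_rfl, rfl⟩
  | succ n ih =>
    intro U hU
    obtain ⟨U', h1, h2⟩ := ih U (by omega)
    have hne : U' ≠ ⊤ := by
      rintro rfl
      rw [finrank_top] at h2
      omega
    obtain ⟨x, -, hx⟩ := SetLike.exists_of_lt (lt_top_iff_ne_top.2 hne)
    refine ⟨U' ⊔ Submodule.span ℝ {x}, h1.trans le_sup_left, ?_⟩
    have hlt : U' < U' ⊔ Submodule.span ℝ {x} :=
      lt_of_le_of_ne le_sup_left fun h => hx (by
        rw [h]; exact Submodule.mem_sup_right (Submodule.mem_span_singleton_self x))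
    have h3 := Submodule.finrank_lt_finrank_of_lt hlt
    have h4 := Submodule.finrank_add_le_finrank_add_finrank U' (Submodule.span ℝ {x})
    have h5 := finrank_span_le_card (R := ℝ) ({x} : Set X)
    simp at h5
    omega

/-- The homogenised space. -/
abbrev Hm (d : ℕ) := WithLp 2 (EuclideanSpace ℝ (Fin d) × ℝ)

/-- Points of the hyperplane at height one. -/
def up {d : ℕ} (y : EuclideanSpace ℝ (Fin d)) : Hm d := WithLp.toLp 2 (y, 1)

/-- Directions. -/
def dir (d : ℕ) : EuclideanSpace ℝ (Fin d) →ₗ[ℝ] Hm d where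
  toFun y := WithLp.toLp 2 (y, 0)
  map_add' x y := by
    have h : ((x + y, 0) : EuclideanSpace ℝ (Fin d) × ℝ) = (x, 0) + (y, 0) := by simp
    rw [h, WithLp.toLp_add]
  map_smul' a x := by
    have h : ((a • x, 0) : EuclideanSpace ℝ (Fin d) × ℝ) = a • (x, 0) := by simp
    rw [h, WithLp.toLp_smul, RingHom.id_apply]

/-- The height functional. -/
def ht (d : ℕ) : Hm d →L[ℝ] ℝ := WithLp.sndL 2 ℝ (EuclideanSpace ℝ (Fin d)) ℝ

lemma ht_up {d : ℕ} (y : EuclideanSpace ℝ (Fin d)) : ht d (up y) = 1 := rfl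

lemma ht_dir {d : ℕ} (y : EuclideanSpace ℝ (Fin d)) : ht d (dir d y) = 0 := rfl

lemma up_sub {d : ℕ} (x y : EuclideanSpace ℝ (Fin d)) : up x - up y = dir d (x - y) := by
  simp only [up, dir, LinearMap.coe_mk, AddHom.coe_mk]
  rw [← WithLp.toLp_sub]; simp

lemma norm_dir {d : ℕ} (x : EuclideanSpace ℝ (Fin d)) : ‖dir d x‖ = ‖x‖ := by
  rw [WithLp.prod_norm_eq_of_L2]
  simp [dir]

lemma dir_inj (d : ℕ) : Function.Injective (dir d) := by
  intro x y h
  have := norm_dir (x - y)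
  rw [map_sub, h, sub_self, norm_zero] at this
  exact sub_eq_zero.1 (norm_eq_zero.1 this.symm)

lemma exists_up {d : ℕ} {v : Hm d} (hv : ht d v = 1) : ∃ y, v = up y := by
  refine ⟨v.fst, ?_⟩
  have h : v.snd = 1 := hv
  unfold up
  rw [← h]
  rfl

lemma mem_Bl_up {d : ℕ} (x y : EuclideanSpace ℝ (Fin d)) (r : ℝ) :
    up y ∈ Bl (ht d) (up x, r) ↔ y ∈ closedBall x r := by
  rw [mem_closedBall, dist_eq_norm]
  show ht d (up y) = 1 ∧ ‖up y - up x‖ ≤ r ↔ _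
  rw [up_sub, norm_dir]
  simp [ht_up]

lemma finrank_map_dir {d : ℕ} (U : Submodule ℝ (EuclideanSpace ℝ (Fin d))) :
    Module.finrank ℝ (U.map (dir d)) = Module.finrank ℝ U :=
  (LinearEquiv.finrank_eq (Submodule.equivMapOfInjective (dir d) (dir_inj d) U)).symm

lemma flat_of_sub {d k : ℕ} (hk : k < d) (L : Submodule ℝ (Hm d))
    (hL : Module.finrank ℝ L ≤ k + 1) :
    ∃ W : Set (EuclideanSpace ℝ (Fin d)), IsKFlat k W ∧ ∀ y, up y ∈ L → y ∈ W := by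
  by_cases h : ∃ y₀ : EuclideanSpace ℝ (Fin d), up y₀ ∈ L
  · obtain ⟨y₀, hy₀⟩ := h
    have hlt : (L.comap (dir d)).map (dir d) < L := by
      refine lt_of_le_of_ne (Submodule.map_comap_le _ _) fun h => ?_
      rw [← h] at hy₀
      obtain ⟨z, -, hz⟩ := hy₀
      have h1 := ht_dir z
      rw [hz, ht_up] at h1
      norm_num at h1
    have h1 := Submodule.finrank_lt_finrank_of_lt hlt
    rw [finrank_map_dir] at h1
    obtain ⟨U, hU, hUr⟩ := exists_extend (k - Module.finrank ℝ (L.comap (dir d)))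
      (L.comap (dir d)) (by rw [finrank_euclideanSpace_fin]; omega)
    refine ⟨_, ⟨y₀, U, by omega, rfl⟩, fun y hy => ⟨y - y₀, hU ?_, by simp⟩⟩
    rw [Submodule.mem_comap, ← up_sub]
    exact L.sub_mem hy hy₀
  · push Not at h
    obtain ⟨U, -, hUr⟩ := exists_extend k (⊥ : Submodule ℝ (EuclideanSpace ℝ (Fin d)))
      (by rw [finrank_euclideanSpace_fin, finrank_bot]; omega)
    exact ⟨_, ⟨0, U, by rw [hUr, finrank_bot, zero_add], rfl⟩, fun y hy => absurd hy (h y)⟩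

lemma sub_of_flat {d k : ℕ} (W : Set (EuclideanSpace ℝ (Fin d))) (hW : IsKFlat k W) :
    ∃ L : Submodule ℝ (Hm d), Module.finrank ℝ L ≤ k + 1 ∧ ∀ y ∈ W, up y ∈ L := by
  obtain ⟨p, U, hU, rfl⟩ := hW
  refine ⟨U.map (dir d) ⊔ Submodule.span ℝ {up p},
    finrank_sup_span _ _ (by rw [finrank_map_dir, hU]), ?_⟩
  rintro _ ⟨u, hu, rfl⟩
  have : up (p + u) = dir d u + up p := by
    rw [← sub_eq_iff_eq_add, up_sub, add_sub_cancel_left]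
  show up (p + u) ∈ _
  rw [this]
  exact Submodule.add_mem_sup (Submodule.mem_map_of_mem hu) (Submodule.mem_span_singleton_self _)

end BallFlat

/-- **heterochromatic `(ℵ₀, k+2)`-theorem for `k`-flats and balls.**
Let `F 0, F 1, …` be families of closed balls in `ℝ^d`, `0 ≤ k < d`. If every infinite
heterochromatic sequence of balls contains `k+2` balls all intersected by a single
`k`-flat, then some family `F i` can be pierced by finitely many `k`-flats. -/
theorem stmt_13 (d k : ℕ) (hd : 1 ≤ d) (hk : k < d)
    (F : ℕ → Set (Set (EuclideanSpace ℝ (Fin d))))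
    (hball : ∀ i, ∀ A ∈ F i, IsClosedBall A)
    (hyp : ∀ C : ℕ → Set (EuclideanSpace ℝ (Fin d)),
      (∃ idx : ℕ → ℕ, StrictMono idx ∧ ∀ j, C j ∈ F (idx j)) →
      ∃ s : Finset ℕ, s.card = k + 2 ∧
        ∃ W : Set (EuclideanSpace ℝ (Fin d)), IsKFlat k W ∧
          ∀ j ∈ s, (C j ∩ W).Nonempty) :
    ∃ (i n : ℕ) (W : Fin n → Set (EuclideanSpace ℝ (Fin d))),
      (∀ m, IsKFlat k (W m)) ∧ ∀ A ∈ F i, ∃ m, (A ∩ W m).Nonempty := by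
  by_contra hcon
  let G : ℕ → Set (BallFlat.Hm d × ℝ) := fun i =>
    {b | ∃ x r, 0 ≤ r ∧ closedBall x r ∈ F i ∧ b = (BallFlat.up x, r)}
  have hGv : ∀ i, ∀ b ∈ G i, BallFlat.ht d b.1 = 1 ∧ 0 ≤ b.2 := by
    rintro i _ ⟨x, r, hr, -, rfl⟩
    exact ⟨BallFlat.ht_up x, hr⟩
  have hns : ∀ i, ¬ BallFlat.Small (BallFlat.ht d) k (G i) := by
    rintro i ⟨S, hS, hSr, hSG⟩
    have hfl : ∀ L : S, ∃ W : Set (EuclideanSpace ℝ (Fin d)), IsKFlat k W ∧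
        ∀ y, BallFlat.up y ∈ L.1 → y ∈ W := fun L => BallFlat.flat_of_sub hk L.1 (hSr L.1 L.2)
    choose W hW hWm using hfl
    have := hS.fintype
    obtain ⟨n, ⟨φ⟩⟩ := Finite.exists_equiv_fin S
    refine hcon ⟨i, n, fun m => W (φ.symm m), fun m => hW _, fun A hA => ?_⟩
    obtain ⟨x, r, hr, rfl⟩ := hball i A hA
    obtain ⟨L, hL, v, hvL, hv⟩ := hSG (BallFlat.up x, r) ⟨x, r, hr, hA, rfl⟩
    obtain ⟨y, rfl⟩ := BallFlat.exists_up hv.1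
    refine ⟨φ ⟨L, hL⟩, y, (BallFlat.mem_Bl_up x y r).1 hv, ?_⟩
    simp only [Equiv.symm_apply_apply]
    exact hWm _ y hvL
  obtain ⟨c, idx, hidx, hc, hfin⟩ := BallFlat.main_abs (BallFlat.ht d) (BallFlat.up 0)
    (BallFlat.ht_up 0) k G hGv hns
  choose x r hr hF hcx using hc
  obtain ⟨s, hs, W, hW, hsW⟩ := hyp (fun j => closedBall (x j) (r j)) ⟨idx, hidx, hF⟩
  obtain ⟨L, hL, hLW⟩ := BallFlat.sub_of_flat W hW
  refine hfin s hs L hL fun j hj => ?_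
  obtain ⟨y, hy, hyW⟩ := hsW j hj
  refine ⟨BallFlat.up y, hLW y hyW, ?_⟩
  rw [hcx j]
  exact (BallFlat.mem_Bl_up _ _ _).2 hy
end

section
/- Let d ≥ 1, let 0 ≤ k < d, and let F be a family of closed balls in ℝ^d (closed Euclidean balls of arbitrary nonnegative radius). Suppose that every infinite subfamily of F contains k+2 balls that are all intersected by a single k-flat. Then there exists a finite set of k-flats in ℝ^d such that every ball of F intersects at least one of these k-flats. -/
open Filter Topology

namespace KP

abbrev Eu (d : ℕ) := EuclideanSpace ℝ (Fin d)
abbrev Hm (d : ℕ) := WithLp 2 (ℝ × EuclideanSpace ℝ (Fin d))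

variable {d : ℕ}

noncomputable def P (x : Eu d) : Hm d := WithLp.toLp 2 (1, x)
noncomputable def e0 : Hm d →L[ℝ] ℝ := WithLp.fstL 2 ℝ ℝ (Eu d)
noncomputable def inr : Eu d →ₗ[ℝ] Hm d :=
  (WithLp.linearEquiv 2 ℝ (ℝ × Eu d)).symm.toLinearMap ∘ₗ LinearMap.inr ℝ ℝ (Eu d)

lemma inr_apply (x : Eu d) : inr x = WithLp.toLp 2 (0, x) := rfl

lemma inr_inj : Function.Injective (inr : Eu d → Hm d) := by
  intro x y h
  have := congrArg WithLp.snd h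
  simpa [inr_apply] using this

lemma e0_P (x : Eu d) : e0 (P x) = 1 := rfl
lemma e0_inr (x : Eu d) : e0 (inr x) = 0 := rfl

lemma P_sub (x y : Eu d) : P x - P y = inr (x - y) := by
  simp only [P, inr_apply]
  rw [← WithLp.toLp_sub]
  simp

lemma norm_inr (x : Eu d) : ‖inr x‖ = ‖x‖ := by
  rw [WithLp.prod_norm_eq_of_L2]
  simp [inr_apply]

lemma norm_P_sub (x y : Eu d) : ‖P x - P y‖ = dist x y := by
  rw [P_sub, norm_inr, dist_eq_norm]

lemma exists_P {z : Hm d} (h : e0 z = 1) : ∃ p, P p = z := by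
  refine ⟨z.snd, ?_⟩
  have h1 : z.fst = 1 := h
  simp only [P, ← h1]
  rfl

lemma cont_P : Continuous (P : Eu d → Hm d) := by
  unfold P
  exact (WithLp.prod_continuous_toLp 2 _ _).comp (by fun_prop)

noncomputable def T (W : Submodule ℝ (Hm d)) : Hm d →L[ℝ] Hm d := Wᗮ.starProjection

variable (W : Submodule ℝ (Hm d))

lemma T_apply (v : Hm d) : T W v = v - W.starProjection v := by
  simp [T, Submodule.starProjection_orthogonal_val]

lemma sub_T_mem (v : Hm d) : v - T W v ∈ W := by
  rw [T_apply]; simp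

lemma T_mem (v : Hm d) : T W v ∈ Wᗮ := by
  simp [T]

lemma T_eq_zero {v : Hm d} : T W v = 0 ↔ v ∈ W := by
  rw [T_apply, sub_eq_zero, eq_comm, Submodule.starProjection_eq_self_iff]

lemma norm_T_le (v : Hm d) : ‖T W v‖ ≤ ‖v‖ := Submodule.norm_starProjection_apply_le _ _

lemma T_T {W W' : Submodule ℝ (Hm d)} (h : W ≤ W') (v : Hm d) : T W' (T W v) = T W' v := by
  have := (T_eq_zero W').2 (h (sub_T_mem W v))
  rw [map_sub, sub_eq_zero] at this
  exact this.symm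

lemma T_self_of_mem {v : Hm d} (h : v ∈ Wᗮ) : T W v = v := by
  rw [T, Submodule.starProjection_eq_self_iff]; exact h

lemma finrank_sup_span_le {V : Type*} [AddCommGroup V] [Module ℝ V] [FiniteDimensional ℝ V]
    (U : Submodule ℝ V) (v : V) :
    Module.finrank ℝ (U ⊔ Submodule.span ℝ {v} : Submodule ℝ V) ≤ Module.finrank ℝ U + 1 := by
  have h1 := Submodule.finrank_add_le_finrank_add_finrank U (Submodule.span ℝ {v})
  have h2 := finrank_span_le_card (R := ℝ) ({v} : Set V)
  simp at h2
  omega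

lemma exists_ext {V : Type*} [AddCommGroup V] [Module ℝ V] [FiniteDimensional ℝ V]
    (U : Submodule ℝ V) (k : ℕ) (h1 : Module.finrank ℝ U ≤ k) (h2 : k ≤ Module.finrank ℝ V) :
    ∃ U' : Submodule ℝ V, U ≤ U' ∧ Module.finrank ℝ U' = k := by
  induction k, h1 using Nat.le_induction with
  | base => exact ⟨U, le_rfl, rfl⟩
  | succ k hk ih =>
    obtain ⟨U', hU, hf⟩ := ih (by omega)
    have hne : U' ≠ ⊤ := by
      rintro rfl
      rw [finrank_top] at hf
      omega
    obtain ⟨v, hv⟩ : ∃ v, v ∉ U' := by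
      by_contra! hc
      exact hne (eq_top_iff.2 fun x _ => hc x)
    refine ⟨U' ⊔ Submodule.span ℝ {v}, hU.trans le_sup_left, ?_⟩
    have h3 := finrank_sup_span_le U' v
    have h4 : U' < U' ⊔ Submodule.span ℝ {v} := by
      refine lt_of_le_of_ne le_sup_left fun h => hv ?_
      rw [h]
      exact Submodule.mem_sup_right (Submodule.mem_span_singleton_self v)
    have h5 := Submodule.finrank_lt_finrank_of_lt h4
    omega


def Miss {ι : Type*} (k : ℕ) (𝒰 : Ultrafilter ι) (c : ι → Eu d) (r : ι → ℝ) : Prop :=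
  ∀ (p : Eu d) (U : Submodule ℝ (Eu d)), Module.finrank ℝ U ≤ k →
    ∀ᶠ i in (𝒰 : Filter ι), ∀ u ∈ U, r i < dist (p + u) (c i)

noncomputable def nm {ι : Type*} (c : ι → Eu d) (W : Submodule ℝ (Hm d)) (i : ι) : Hm d :=
  ‖T W (P (c i))‖⁻¹ • T W (P (c i))

variable {ι : Type*} {k : ℕ} {𝒰 : Ultrafilter ι} {c : ι → Eu d} {r : ι → ℝ}

lemma exists_lim (𝒰 : Ultrafilter ι) (c : ι → Eu d) (W : Submodule ℝ (Hm d)) :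
    ∃ w, Tendsto (nm c W) 𝒰 (𝓝 w) := by
  have hK : IsCompact (Metric.closedBall (0 : Hm d) 1) := isCompact_closedBall _ _
  have := hK.ultrafilter_le_nhds (𝒰.map (nm c W)) ?_
  · obtain ⟨w, -, hw⟩ := this
    exact ⟨w, hw⟩
  · rw [le_principal_iff]
    refine Filter.mem_map.2 (Filter.univ_mem' fun i => ?_)
    simp only [Set.mem_preimage, mem_closedBall_zero_iff, nm, norm_smul, norm_inv, norm_norm]
    exact inv_mul_le_one

noncomputable def lim (𝒰 : Ultrafilter ι) (c : ι → Eu d) (W : Submodule ℝ (Hm d)) : Hm d :=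
  (exists_lim 𝒰 c W).choose

lemma tendsto_lim (𝒰 : Ultrafilter ι) (c : ι → Eu d) (W : Submodule ℝ (Hm d)) :
    Tendsto (nm c W) 𝒰 (𝓝 (lim 𝒰 c W)) := (exists_lim 𝒰 c W).choose_spec

noncomputable def nxt (𝒰 : Ultrafilter ι) (c : ι → Eu d) (W : Submodule ℝ (Hm d)) :
    Submodule ℝ (Hm d) := W ⊔ Submodule.span ℝ {lim 𝒰 c W}

lemma le_nxt : W ≤ nxt 𝒰 c W := le_sup_left
lemma lim_mem_nxt : lim 𝒰 c W ∈ nxt 𝒰 c W :=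
  Submodule.mem_sup_right (Submodule.mem_span_singleton_self _)

lemma finrank_nxt : Module.finrank ℝ (nxt 𝒰 c W) ≤ Module.finrank ℝ W + 1 :=
  finrank_sup_span_le _ _

lemma lim_mem_orth : lim 𝒰 c W ∈ Wᗮ := by
  have hc : IsClosed ((Wᗮ : Submodule ℝ (Hm d)) : Set (Hm d)) := Submodule.isClosed_orthogonal W
  refine hc.mem_of_tendsto (tendsto_lim 𝒰 c W) (Filter.Eventually.of_forall fun i => ?_)
  exact Submodule.smul_mem _ _ (T_mem W _)

/-- Balls eventually miss the affine trace of a subspace of dimension at most `k+1`. -/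
lemma missW (hm : Miss k 𝒰 c r) {W : Submodule ℝ (Hm d)} (hW : Module.finrank ℝ W ≤ k + 1) :
    ∀ᶠ i in (𝒰 : Filter ι), ∀ p, dist p (c i) ≤ r i → P p ∉ W := by
  by_cases h : ∃ q, P q ∈ W
  · obtain ⟨q, hq⟩ := h
    have hU : Module.finrank ℝ (W.comap inr) ≤ k := by
      have h1 : (W.comap inr).map inr < W := by
        refine lt_of_le_of_ne (Submodule.map_comap_le _ _) fun h => ?_
        rw [← h] at hq
        obtain ⟨u, -, hu⟩ := hq
        have := e0_P q
        rw [← hu, e0_inr] at this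
        exact zero_ne_one this
      have h2 := Submodule.finrank_lt_finrank_of_lt h1
      have h3 := (Submodule.equivMapOfInjective inr inr_inj (W.comap inr)).finrank_eq
      omega
    filter_upwards [hm q _ hU] with i hi p hp hpW
    have := hi (p - q) (by
      rw [Submodule.mem_comap, ← P_sub]
      exact W.sub_mem hpW hq)
    rw [add_sub_cancel] at this
    linarith
  · push Not at h
    exact Filter.Eventually.of_forall fun i p _ => h p

lemma T_ne (hr : ∀ i, 0 ≤ r i) (hm : Miss k 𝒰 c r) (hW : Module.finrank ℝ W ≤ k + 1) :
    ∀ᶠ i in (𝒰 : Filter ι), T W (P (c i)) ≠ 0 := by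
  filter_upwards [missW hm hW] with i hi h
  exact hi (c i) (by simpa using hr i) ((T_eq_zero W).1 h)

lemma norm_lim (hr : ∀ i, 0 ≤ r i) (hm : Miss k 𝒰 c r) (hW : Module.finrank ℝ W ≤ k + 1) :
    ‖lim 𝒰 c W‖ = 1 := by
  refine tendsto_nhds_unique (tendsto_lim 𝒰 c W).norm ?_
  refine tendsto_const_nhds.congr' ?_
  filter_upwards [T_ne W hr hm hW] with i hi
  rw [nm, norm_smul, norm_inv, norm_norm, inv_mul_cancel₀ (norm_ne_zero_iff.2 hi)]

/-- Radii are small relative to the distance from `W`. -/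
lemma small_r (hr : ∀ i, 0 ≤ r i) (hm : Miss k 𝒰 c r) (hW : Module.finrank ℝ W ≤ k + 1)
    (a : Hm d) (ha : e0 a = 1)
    (hWa : Module.finrank ℝ (nxt 𝒰 c W ⊔ Submodule.span ℝ {a} : Submodule ℝ (Hm d)) ≤ k + 1)
    {ε : ℝ} (hε : 0 < ε) :
    ∀ᶠ i in (𝒰 : Filter ι), r i < ε * ‖T W (P (c i))‖ := by
  by_contra hcon
  rw [← Ultrafilter.eventually_not] at hcon
  set W' := nxt 𝒰 c W with hW'
  have hT : Tendsto (fun i => ‖T W' (nm c W i)‖ * (1 + ‖e0 (d := d)‖ * ‖a‖)) 𝒰 (𝓝 0) := by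
    have h1 := (((T W').continuous.tendsto _).comp (tendsto_lim 𝒰 c W)).norm.mul_const
      (1 + ‖e0 (d := d)‖ * ‖a‖)
    rw [(T_eq_zero W').2 (lim_mem_nxt W), norm_zero, zero_mul] at h1
    exact h1
  have h2 := hT.eventually (gt_mem_nhds hε)
  obtain ⟨i, h3, h4, h5, h6⟩ := (hcon.and (h2.and ((T_ne W hr hm hW).and (missW hm hWa)))).exists
  rw [not_lt] at h3
  set X := P (c i) with hX
  have h7 : T W' X = ‖T W X‖ • T W' (nm c W i) := by
    rw [nm, ← hX, map_smul, smul_smul, mul_inv_cancel₀ (norm_ne_zero_iff.2 h5), one_smul,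
      T_T (le_nxt W)]
  have hz : e0 (X - T W' X + e0 (T W' X) • a) = 1 := by
    rw [map_add, map_sub, map_smul, ha, hX, e0_P]; simp
  obtain ⟨p, hp⟩ := exists_P hz
  refine h6 p ?_ ?_
  · rw [← norm_P_sub, hp, ← hX]
    have : X - T W' X + e0 (T W' X) • a - X = - T W' X + e0 (T W' X) • a := by abel
    rw [this]
    have h8 : ‖e0 (T W' X) • a‖ ≤ ‖e0 (d := d)‖ * ‖T W' X‖ * ‖a‖ := by
      rw [norm_smul]
      exact mul_le_mul_of_nonneg_right (ContinuousLinearMap.le_opNorm _ _) (norm_nonneg _)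
    have h9 : ‖T W' X‖ = ‖T W X‖ * ‖T W' (nm c W i)‖ := by
      rw [h7, norm_smul, norm_norm]
    calc _ ≤ ‖- T W' X‖ + ‖e0 (T W' X) • a‖ := norm_add_le _ _
      _ ≤ ‖T W' X‖ + ‖e0 (d := d)‖ * ‖T W' X‖ * ‖a‖ := by rw [norm_neg]; gcongr
      _ = ‖T W X‖ * (‖T W' (nm c W i)‖ * (1 + ‖e0 (d := d)‖ * ‖a‖)) := by rw [h9]; ring
      _ ≤ ‖T W X‖ * ε := by gcongr
      _ ≤ r i := by linarith
  · rw [hp]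
    exact add_mem (Submodule.mem_sup_left (sub_T_mem _ _))
      (Submodule.mem_sup_right (Submodule.smul_mem _ _ (Submodule.mem_span_singleton_self _)))

def Ind (c : ι → Eu d) (r : ι → ℝ) (W : Submodule ℝ (Hm d)) (t : Finset ι) : Prop :=
  ∀ p : ι → Eu d, (∀ i ∈ t, dist (p i) (c i) ≤ r i) →
    LinearIndepOn ℝ (fun i => T W (P (p i))) (t : Set ι)

lemma notMem_span_of_ker {V κ : Type*} [AddCommGroup V] [Module ℝ V] (f : V →ₗ[ℝ] V) (v : κ → V)
    (h : LinearIndependent ℝ (f ∘ v)) {w : V} (hw : f w = 0) (hw0 : w ≠ 0) :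
    w ∉ Submodule.span ℝ (Set.range v) := by
  intro hmem
  rw [Finsupp.mem_span_range_iff_exists_finsupp] at hmem
  obtain ⟨l, rfl⟩ := hmem
  rw [linearIndependent_iff] at h
  have := h l (by rw [Finsupp.linearCombination_apply, ← hw, map_finsuppSum]; simp)
  apply hw0
  rw [this]
  simp

lemma indep_option {W' : Submodule ℝ (Hm d)} (hWW : W ≤ W') (t : Finset ι) (ht : Ind c r W' t)
    (z : Hm d) (hz : z ≠ 0) (hzW : z ∈ W')
    (q : t → Eu d) (hq : ∀ i : t, dist (q i) (c i) ≤ r i) :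
    LinearIndependent ℝ
      (fun o => Option.casesOn' o z (fun i => T W (P (q i))) : Option t → Hm d) := by
  classical
  have h0 : LinearIndependent ℝ (fun i : t => T W' (P (q i))) := by
    have := ht (fun i => if h : i ∈ t then q ⟨i, h⟩ else c i) (by
      intro i hi
      simp only [hi, dif_pos]
      exact hq ⟨i, hi⟩)
    have h2 : LinearIndependent ℝ (fun i : t => T W'
      (P ((fun i => if h : i ∈ t then q ⟨i, h⟩ else c i) (i : ι)))) := this
    have h3 : (fun i : t => T W'
      (P ((fun i => if h : i ∈ t then q ⟨i, h⟩ else c i) (i : ι)))) =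
        fun i : t => T W' (P (q i)) := by
      funext i
      have := i.2
      simp
    rwa [h3] at h2
  have h1 : (fun i : t => T W' (P (q i))) =
      (T W').toLinearMap ∘ (fun i : t => T W (P (q i))) := by
    funext i
    exact (T_T hWW _).symm
  rw [h1] at h0
  exact (h0.of_comp _).option (notMem_span_of_ker _ _ h0 ((T_eq_zero W').2 hzW) hz)

lemma exists_delta_aux {V E κ : Type*} [NormedAddCommGroup V] [NormedSpace ℝ V]
    [TopologicalSpace E] [Finite κ] (g : E → V) (hg : Continuous g)
    (K : κ → Set E) (hK : ∀ i, IsCompact (K i)) (w : V)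
    (h : ∀ q : κ → E, (∀ i, q i ∈ K i) → LinearIndependent ℝ
      (fun o => Option.casesOn' o w (fun i => g (q i)) : Option κ → V)) :
    ∃ δ > 0, ∀ z, dist z w < δ → ∀ q : κ → E, (∀ i, q i ∈ K i) →
      LinearIndependent ℝ
      (fun o => Option.casesOn' o z (fun i => g (q i)) : Option κ → V) := by
  have hΦ : Continuous (fun (q : (κ → E) × V) (o : Option κ) =>
      (Option.casesOn' o q.2 (fun i => g (q.1 i)) : V)) := by
    refine continuous_pi fun o => ?_
    cases o with
    | none => exact continuous_snd
    | some i =>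
      exact hg.comp ((continuous_apply i).comp continuous_fst)
  have hL : IsOpen {f : Option κ → V | LinearIndependent ℝ f} :=
    isOpen_setOfPred_linearIndependent
  have hO := hL.preimage hΦ
  obtain ⟨u, v, hu, hv, hKu, hwv, huv⟩ := generalized_tube_lemma (isCompact_univ_pi hK)
    (isCompact_singleton (x := w)) hO (by
      rintro ⟨q, z⟩ ⟨hq, hz⟩
      have hz' : z = w := hz
      rw [hz']
      exact h q fun i => hq i trivial)
  obtain ⟨δ, hδ, hball⟩ := Metric.mem_nhds_iff.1 (hv.mem_nhds (hwv rfl))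
  refine ⟨δ, hδ, fun z hz q hq => ?_⟩
  have h1 : (q, z) ∈ u ×ˢ v := ⟨hKu fun i _ => hq i, hball hz⟩
  exact huv h1

lemma exists_delta (t : Finset ι) (w : Hm d)
    (h : ∀ q : t → Eu d, (∀ i : t, dist (q i) (c i) ≤ r i) → LinearIndependent ℝ
      (fun o => Option.casesOn' o w (fun i => T W (P (q i))) : Option t → Hm d)) :
    ∃ δ > 0, ∀ z, dist z w < δ → ∀ q : t → Eu d, (∀ i : t, dist (q i) (c i) ≤ r i) →
      LinearIndependent ℝ
      (fun o => Option.casesOn' o z (fun i => T W (P (q i))) : Option t → Hm d) :=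
  exists_delta_aux (fun x => T W (P x)) ((T W).continuous.comp cont_P)
    (fun i : t => Metric.closedBall (c i) (r i)) (fun _ => isCompact_closedBall _ _) w h

lemma step [DecidableEq ι] (hr : ∀ i, 0 ≤ r i) (hm : Miss k 𝒰 c r)
    (hW : Module.finrank ℝ W ≤ k + 1)
    (a : Hm d) (ha : e0 a = 1)
    (hWa : Module.finrank ℝ (nxt 𝒰 c W ⊔ Submodule.span ℝ {a} : Submodule ℝ (Hm d)) ≤ k + 1)
    (t : Finset ι) (ht : Ind c r (nxt 𝒰 c W) t) :
    ∀ᶠ i in (𝒰 : Filter ι), i ∉ t → Ind c r W (insert i t) := by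
  have hw1 : ‖lim 𝒰 c W‖ = 1 := norm_lim W hr hm hW
  have hz2 : lim 𝒰 c W ≠ 0 := by
    rw [← norm_ne_zero_iff, hw1]; exact one_ne_zero
  obtain ⟨δ, hδ, hind⟩ := exists_delta W t (lim 𝒰 c W)
    (indep_option (c := c) (r := r) W (le_nxt W) t ht _ hz2 (lim_mem_nxt W))
  have hnear := (tendsto_lim 𝒰 c W).eventually (Metric.ball_mem_nhds _ (half_pos hδ))
  filter_upwards [hnear, small_r W hr hm hW a ha hWa (half_pos hδ), T_ne W hr hm hW]
    with i h1 h2 h3 hit p hp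
  have hs : ‖T W (P (c i))‖⁻¹ • T W (P (p i)) ∈ Metric.ball (lim 𝒰 c W) δ := by
    rw [Metric.mem_ball]
    have hpos : 0 < ‖T W (P (c i))‖ := norm_pos_iff.2 h3
    have h4 : dist (‖T W (P (c i))‖⁻¹ • T W (P (p i))) (nm c W i) < δ / 2 := by
      rw [dist_eq_norm, nm, ← smul_sub, ← map_sub, norm_smul, norm_inv, norm_norm,
        inv_mul_lt_iff₀ hpos]
      calc _ ≤ ‖P (p i) - P (c i)‖ := norm_T_le _ _
        _ ≤ r i := by rw [norm_P_sub]; exact hp i (by simp)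
        _ < _ := by linarith
    have := dist_triangle (‖T W (P (c i))‖⁻¹ • T W (P (p i))) (nm c W i) (lim 𝒰 c W)
    have h5 : dist (nm c W i) (lim 𝒰 c W) < δ / 2 := h1
    linarith
  have hfin : LinearIndependent ℝ (fun o => Option.casesOn' o (‖T W (P (c i))‖⁻¹ • T W (P (p i)))
      (fun j : t => T W (P (p j))) : Option t → Hm d) := 
    hind _ hs (fun j => p j) fun j => hp j (Finset.mem_insert_of_mem j.2)
  rw [linearIndependent_option'] at hfin
  rw [Finset.coe_insert, linearIndepOn_insert (by simpa using hit)]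
  refine ⟨hfin.1, fun hmem => hfin.2 (Submodule.smul_mem _ _ ?_)⟩
  convert hmem using 2
  ext x
  simp

lemma e0_eq_zero {W' : Submodule ℝ (Hm d)} (hinf : ∀ q, P q ∉ W') {v : Hm d} (hv : v ∈ W') :
    e0 v = 0 := by
  by_contra h
  obtain ⟨q, hq⟩ := exists_P (z := (e0 v)⁻¹ • v) (by
    rw [map_smul, smul_eq_mul, inv_mul_cancel₀ h])
  exact hinf q (hq ▸ W'.smul_mem _ hv)

/-- The case where the whole flag lies at infinity. -/
lemma special [DecidableEq ι] (hr : ∀ i, 0 ≤ r i) (hm : Miss k 𝒰 c r)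
    (hW : Module.finrank ℝ W ≤ k) (hinf : ∀ q, P q ∉ nxt 𝒰 c W) (j : ι) :
    ∀ᶠ i in (𝒰 : Filter ι), i ∉ ({j} : Finset ι) → Ind c r W (insert i {j}) := by
  have hWk : Module.finrank ℝ W ≤ k + 1 := by omega
  have hw1 : ‖lim 𝒰 c W‖ = 1 := norm_lim W hr hm hWk
  have hw0 : e0 (lim 𝒰 c W) = 0 := e0_eq_zero hinf (lim_mem_nxt W)
  have heT : ∀ v, e0 (T W v) = e0 v := by
    intro v
    have := e0_eq_zero hinf (le_nxt W (sub_T_mem W v))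
    rw [map_sub, sub_eq_zero] at this
    exact this.symm
  have hinv : Tendsto (fun i => ‖T W (P (c i))‖⁻¹) 𝒰 (𝓝 0) := by
    have h1 := ((e0 (d := d)).continuous.tendsto _).comp (tendsto_lim 𝒰 c W)
    rw [hw0] at h1
    refine h1.congr fun i => ?_
    simp only [Function.comp, nm]
    rw [map_smul, heT, e0_P, smul_eq_mul, mul_one]
  set C : ℝ := ‖P (c j)‖ + r j + ‖P (0 : Eu d)‖ + 1 with hC
  have hCpos : 0 < C := by
    have := hr j
    positivity
  have hfin : Module.finrank ℝ (W ⊔ Submodule.span ℝ {P (0 : Eu d) + (2 * C) • lim 𝒰 c W} :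
      Submodule ℝ (Hm d)) ≤ k + 1 := (finrank_sup_span_le _ _).trans (by omega)
  have hnear := (tendsto_lim 𝒰 c W).eventually (Metric.ball_mem_nhds _ one_half_pos)
  have hbig := hinv.eventually (gt_mem_nhds (show (0 : ℝ) < (2 * C)⁻¹ by positivity))
  filter_upwards [hnear, hbig, missW hm hfin, T_ne W hr hm hWk] with i h1 h2 h3 h4 hij p hp
  have hij' : i ≠ j := by simpa using hij
  have hτ : 0 < ‖T W (P (c i))‖ := norm_pos_iff.2 h4
  have hτ2 : 2 * C < ‖T W (P (c i))‖ := by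
    rwa [inv_lt_inv₀ hτ (by positivity)] at h2
  -- the projections are disjoint
  have hfar : T W (P (p i)) ≠ T W (P (p j)) := by
    intro heq
    have hpi : ‖P (p i) - P (c i)‖ ≤ r i := by rw [norm_P_sub]; exact hp i (by simp)
    have hpj : ‖P (p j) - P (c j)‖ ≤ r j := by rw [norm_P_sub]; exact hp j (by simp)
    have e1 : ‖T W (P (c i))‖ ≤ r i + (‖P (c j)‖ + r j) := by
      calc ‖T W (P (c i))‖ = ‖T W (P (p j)) - T W (P (p i) - P (c i))‖ := by
            rw [map_sub, heq]; congr 1; abel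
        _ ≤ ‖T W (P (p j))‖ + ‖T W (P (p i) - P (c i))‖ := norm_sub_le _ _
        _ ≤ ‖P (p j)‖ + ‖P (p i) - P (c i)‖ := add_le_add (norm_T_le _ _) (norm_T_le _ _)
        _ ≤ (‖P (c j)‖ + ‖P (p j) - P (c j)‖) + r i :=
            add_le_add (norm_le_norm_add_norm_sub' _ _) hpi
        _ ≤ _ := by linarith
    have hz : e0 (P (c i) - T W (P (c i)) + (P (0 : Eu d) + (2 * C) • lim 𝒰 c W)) = 1 := by
      rw [map_add, map_sub, heT, map_add, map_smul, hw0, e0_P, e0_P]; simp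
    obtain ⟨x, hx⟩ := exists_P hz
    refine h3 x ?_ ?_
    · rw [← norm_P_sub, hx]
      have hTn : T W (P (c i)) = ‖T W (P (c i))‖ • nm c W i := by
        rw [nm, smul_smul, mul_inv_cancel₀ hτ.ne', one_smul]
      have hn : ‖nm c W i‖ = 1 := by
        rw [nm, norm_smul, norm_inv, norm_norm, inv_mul_cancel₀ hτ.ne']
      set τ := ‖T W (P (c i))‖ with hτdef
      have hd : ‖lim 𝒰 c W - nm c W i‖ ≤ 1 / 2 := by
        rw [← dist_eq_norm, dist_comm]; exact le_of_lt h1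
      have e2 : P (c i) - T W (P (c i)) + (P (0 : Eu d) + (2 * C) • lim 𝒰 c W) - P (c i) =
          P (0 : Eu d) + ((2 * C) • (lim 𝒰 c W - nm c W i) - (τ - 2 * C) • nm c W i) := by
        rw [hTn]; module
      rw [e2]
      calc _ ≤ ‖P (0 : Eu d)‖ + (‖(2 * C) • (lim 𝒰 c W - nm c W i)‖ +
              ‖(τ - 2 * C) • nm c W i‖) :=
            (norm_add_le _ _).trans (add_le_add le_rfl (norm_sub_le _ _))
        _ = ‖P (0 : Eu d)‖ + ((2 * C) * ‖lim 𝒰 c W - nm c W i‖ + (τ - 2 * C)) := by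
            rw [norm_smul, norm_smul, hn, Real.norm_of_nonneg (by positivity),
              Real.norm_of_nonneg (by linarith), mul_one]
        _ ≤ ‖P (0 : Eu d)‖ + ((2 * C) * (1 / 2) + (τ - 2 * C)) := by gcongr
        _ ≤ r i := by linarith
    · rw [hx]
      exact add_mem (Submodule.mem_sup_left (sub_T_mem _ _))
        (Submodule.mem_sup_right (Submodule.mem_span_singleton_self _))
  rw [Finset.coe_insert, Finset.coe_singleton, linearIndepOn_insert (by simpa using hij')]
  have hne : T W (P (p j)) ≠ 0 := by
    intro h
    have := heT (P (p j))
    rw [h, e0_P, map_zero] at this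
    exact zero_ne_one this
  refine ⟨LinearIndepOn.singleton hne, fun hmem => ?_⟩
  rw [Set.image_singleton, Submodule.mem_span_singleton] at hmem
  obtain ⟨s, hs⟩ := hmem
  have h5 := congrArg e0 hs
  rw [map_smul, heT, heT, e0_P, e0_P, smul_eq_mul, mul_one] at h5
  rw [h5, one_smul] at hs
  exact hfar hs.symm

noncomputable def flag (𝒰 : Ultrafilter ι) (c : ι → Eu d) : ℕ → Submodule ℝ (Hm d)
  | 0 => ⊥
  | n + 1 => nxt 𝒰 c (flag 𝒰 c n)

lemma finrank_flag (n : ℕ) : Module.finrank ℝ (flag 𝒰 c n) ≤ n := by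
  induction n with
  | zero => rw [flag, finrank_bot]
  | succ n ih => exact (finrank_nxt _).trans (by omega)

lemma extend [DecidableEq ι] (hr : ∀ i, 0 ≤ r i) (hm : Miss k 𝒰 c r) (t : Finset ι)
    (hcard : t.card ≤ k + 1) (ht : Ind c r (flag 𝒰 c (k + 2 - t.card)) t) :
    ∀ᶠ i in (𝒰 : Filter ι), i ∉ t →
      Ind c r (flag 𝒰 c (k + 2 - (insert i t).card)) (insert i t) := by
  obtain ⟨j, hj⟩ : ∃ j, t.card + j = k + 1 := ⟨k + 1 - t.card, by omega⟩
  have hj1 : k + 2 - t.card = j + 1 := by omega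
  rw [hj1] at ht
  suffices h : ∀ᶠ i in (𝒰 : Filter ι), i ∉ t → Ind c r (flag 𝒰 c j) (insert i t) by
    filter_upwards [h] with i hi hit
    have : k + 2 - (insert i t).card = j := by
      rw [Finset.card_insert_of_notMem hit]; omega
    rw [this]
    exact hi hit
  have hfj := finrank_flag (𝒰 := 𝒰) (c := c) j
  have hfj1 : Module.finrank ℝ (nxt 𝒰 c (flag 𝒰 c j)) ≤ j + 1 :=
    (finrank_nxt _).trans (by omega)
  rcases Nat.eq_zero_or_pos t.card with h0 | hpos
  · have ht0 : t = ∅ := Finset.card_eq_zero.1 h0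
    subst ht0
    filter_upwards [missW hm (W := flag 𝒰 c j) (by simp at hj; omega)] with i hi _ p hp
    rw [Finset.coe_insert, Finset.coe_empty, insert_empty_eq]
    refine LinearIndepOn.singleton fun h => ?_
    exact hi (p i) (hp i (by simp)) ((T_eq_zero _).1 h)
  · by_cases hjk : j < k
    · refine step _ hr hm (by omega) (P 0) (e0_P 0) ?_ t ht
      exact (finrank_sup_span_le _ _).trans (by omega)
    · have hjk' : j = k := by omega
      by_cases hq : ∃ q, P q ∈ nxt 𝒰 c (flag 𝒰 c j)
      · obtain ⟨q, hq⟩ := hq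
        refine step _ hr hm (by omega) (P q) (e0_P q) ?_ t ht
        rw [sup_eq_left.2 ((Submodule.span_singleton_le_iff_mem _ _).2 hq)]
        omega
      · push Not at hq
        obtain ⟨b, rfl⟩ := Finset.card_eq_one.1 (show t.card = 1 by omega)
        exact special _ hr hm (by omega) hq b

lemma exists_infinite (hr : ∀ i, 0 ≤ r i) (hm : Miss k 𝒰 c r) :
    ∃ G : Set ι, G.Infinite ∧ ∀ t : Finset ι, (t : Set ι) ⊆ G → t.card = k + 2 → Ind c r ⊥ t := by
  classical
  let Fam : Set (Set ι) := {G | ∀ t : Finset ι, (t : Set ι) ⊆ G → t.card ≤ k + 2 →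
    Ind c r (flag 𝒰 c (k + 2 - t.card)) t}
  have hFC : Order.IsOfFiniteCharacter Fam := by
    intro G
    constructor
    · intro h y hy _ t ht
      exact h t (ht.trans hy)
    · intro h t ht
      exact h t ht t.finite_toSet t subset_rfl
  have hemp : (∅ : Set ι) ∈ Fam := by
    intro t ht _ p _
    have : (t : Set ι) = ∅ := Set.subset_empty_iff.1 ht
    rw [this]
    exact linearIndepOn_empty _ _
  obtain ⟨G, -, hG⟩ := hFC.exists_maximal hemp
  refine ⟨G, fun hfin => ?_, fun t ht hc => ?_⟩
  · have hnew : ∀ᶠ i in (𝒰 : Filter ι), i ∉ G := by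
      have : ∀ᶠ i in (𝒰 : Filter ι), ∀ j ∈ G, i ≠ j := by
        rw [Filter.eventually_all_finite hfin]
        intro j _
        filter_upwards [hm (c j) ⊥ (by simp)] with i hi hij
        have := hi 0 (by simp)
        rw [hij] at this
        simp at this
        linarith [hr j]
      filter_upwards [this] with i hi hiG
      exact hi i hiG rfl
    have hall : ∀ᶠ i in (𝒰 : Filter ι), ∀ t ∈ hfin.toFinset.powerset, t.card ≤ k + 1 → i ∉ t →
        Ind c r (flag 𝒰 c (k + 2 - (insert i t).card)) (insert i t) := by
      rw [Filter.eventually_all_finset]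
      intro t ht
      by_cases hc : t.card ≤ k + 1
      · have hsub : (t : Set ι) ⊆ G := by
          intro x hx
          have := Finset.mem_powerset.1 ht hx
          simpa using this
        filter_upwards [extend hr hm t hc (hG.prop t hsub (by omega))] with i hi _
        exact hi
      · exact Filter.Eventually.of_forall fun i h => absurd h hc
    obtain ⟨i, hi, hti⟩ := (hnew.and hall).exists
    have hmem : insert i G ∈ Fam := by
      intro t ht hc
      by_cases hit : i ∈ t
      · have h1 := hti (t.erase i) (by
          rw [Finset.mem_powerset]
          intro x hx
          rw [Finset.mem_erase] at hx
          have := ht hx.2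
          simpa [hx.1] using this) (by rw [Finset.card_erase_of_mem hit]; omega) (by simp)
        rwa [Finset.insert_erase hit] at h1
      · refine hG.prop t (fun x hx => ?_) hc
        rcases ht hx with h | h
        · exact absurd (h ▸ hx) hit
        · exact h
    exact hi (hG.le_of_ge hmem (Set.subset_insert _ _) (Set.mem_insert _ _))
  · have := hG.prop t ht hc.le
    rwa [hc, Nat.sub_self] at this

end KP

theorem stmt_14 (d k : ℕ) (hd : 1 ≤ d) (hk : k < d)
    (F : Set (Set (EuclideanSpace ℝ (Fin d))))
    (hball : ∀ A ∈ F, IsClosedBall A)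
    (hyp : ∀ G ⊆ F, G.Infinite →
      ∃ T : Finset (Set (EuclideanSpace ℝ (Fin d))), ↑T ⊆ G ∧ T.card = k + 2 ∧
        ∃ W : Set (EuclideanSpace ℝ (Fin d)), IsKFlat k W ∧
          ∀ A ∈ T, (A ∩ W).Nonempty) :
    ∃ (n : ℕ) (W : Fin n → Set (EuclideanSpace ℝ (Fin d))),
      (∀ m, IsKFlat k (W m)) ∧ ∀ A ∈ F, ∃ m, (A ∩ W m).Nonempty := by
  classical
  by_contra hcon
  choose c' r' hr' hA' using hball
  let c : F → EuclideanSpace ℝ (Fin d) := fun A => c' A.1 A.2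
  let r : F → ℝ := fun A => r' A.1 A.2
  have hr : ∀ A, 0 ≤ r A := fun A => hr' A.1 A.2
  have hA : ∀ A : F, A.1 = Metric.closedBall (c A) (r A) := fun A => hA' A.1 A.2
  let S : Set (Set F) := {s | ∃ W, IsKFlat k W ∧ s = {A : F | ¬ (A.1 ∩ W).Nonempty}}
  have hne : (Filter.generate S).NeBot := by
    rw [Filter.generate_neBot_iff]
    intro t hts htf
    by_contra hemp
    apply hcon
    choose Wf hWf hWe using hts
    have := htf.to_subtype
    let e := (Finite.equivFin t).symm
    refine ⟨Nat.card t, fun m => Wf (e m).2, fun m => hWf _, fun A hAF => ?_⟩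
    by_contra! hno
    apply hemp
    refine ⟨⟨A, hAF⟩, fun s hs => ?_⟩
    have h1 := hno (e.symm ⟨s, hs⟩)
    rw [hWe hs]
    intro h2
    have h3 : ∀ (x : t) (_ : x = ⟨s, hs⟩), ¬ (A ∩ Wf x.2).Nonempty → False := by
      rintro _ rfl h4
      exact h4 h2
    exact h3 _ (e.apply_symm_apply _) (Set.not_nonempty_iff_eq_empty.2 h1)
  let 𝒰 : Ultrafilter F := Ultrafilter.of (Filter.generate S)
  have hm : KP.Miss k 𝒰 c r := by
    intro p U hU
    obtain ⟨U', hUU, hf⟩ := KP.exists_ext U k hU (by simp; omega)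
    have h1 : {A : F | ¬ (A.1 ∩ ((fun u => p + u) '' (U' : Set _))).Nonempty} ∈
        (𝒰 : Filter F) :=
      Ultrafilter.of_le _ (Filter.mem_generate_of_mem ⟨_, ⟨p, U', hf, rfl⟩, rfl⟩)
    filter_upwards [h1] with A h2 u hu
    by_contra! h3
    refine h2 ⟨p + u, ?_, ⟨u, hUU hu, rfl⟩⟩
    rw [hA A]
    exact h3
  obtain ⟨G, hGinf, hG⟩ := KP.exists_infinite hr hm
  obtain ⟨T, hTG, hTc, W, ⟨p0, U, hU, rfl⟩, hTW⟩ := hyp (Subtype.val '' G)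
    (by rintro _ ⟨A, -, rfl⟩; exact A.2) (hGinf.image Subtype.val_injective.injOn)
  let t : Finset F := T.subtype (· ∈ F)
  have htT : ∀ A : F, A ∈ t ↔ A.1 ∈ T := fun A => Finset.mem_subtype
  have htc : t.card = k + 2 := by
    rw [← hTc, Finset.card_subtype, Finset.filter_true_of_mem]
    intro A hA
    obtain ⟨B, -, rfl⟩ := hTG hA
    exact B.2
  have htG : (t : Set F) ⊆ G := by
    intro A hA
    obtain ⟨B, hB, h⟩ := hTG ((htT A).1 hA)
    rwa [← Subtype.val_injective h]
  have hpt : ∀ A : F, ∃ x, A ∈ t → dist x (c A) ≤ r A ∧ x ∈ (fun u => p0 + u) '' (U : Set _) := by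
    intro A
    by_cases h : A ∈ t
    · obtain ⟨x, hx1, hx2⟩ := hTW A.1 ((htT A).1 h)
      rw [hA A] at hx1
      exact ⟨x, fun _ => ⟨hx1, hx2⟩⟩
    · exact ⟨0, fun h' => absurd h' h⟩
  choose p hp using hpt
  have hind : LinearIndependent ℝ (fun A : t => KP.T ⊥ (KP.P (p A))) :=
    hG t htG htc p fun A hA => (hp A hA).1
  have hind2 : LinearIndependent ℝ (fun A : t => KP.P (p A)) :=
    LinearIndependent.of_comp (KP.T ⊥).toLinearMap hind
  have hspan : Submodule.span ℝ (Set.range fun A : t => KP.P (p A)) ≤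
      U.map KP.inr ⊔ Submodule.span ℝ {KP.P p0} := by
    rw [Submodule.span_le]
    rintro _ ⟨A, rfl⟩
    obtain ⟨u, hu, hpu⟩ := (hp A.1 A.2).2
    have : KP.P (p A) = KP.inr u + KP.P p0 := by
      rw [← sub_eq_iff_eq_add, KP.P_sub, ← hpu]
      simp
    simp only [this]
    exact add_mem (Submodule.mem_sup_left (Submodule.mem_map_of_mem hu))
      (Submodule.mem_sup_right (Submodule.mem_span_singleton_self _))
  have h1 := finrank_span_eq_card hind2
  have h2 := Submodule.finrank_mono hspan
  have h3 := KP.finrank_sup_span_le (U.map KP.inr) (KP.P p0)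
  have h4 := (Submodule.finrank_map_le KP.inr U).trans hU.le
  rw [Fintype.card_coe, htc] at h1
  omega
end

section
/- Let d ≥ 1, let 0 ≤ k < d, and let F be a family of axis-parallel boxes in ℝ^d. Suppose that every infinite subfamily of F contains two boxes that are both intersected by a single axis-parallel k-flat. Then there exists a finite set of axis-parallel k-flats in ℝ^d such that every box of F intersects at least one of them. -/
/-- An axis-parallel box in `ℝ^d`: a product of `d` nonempty compact intervals. -/
def IsBox {d : ℕ} (B : Set (EuclideanSpace ℝ (Fin d))) : Prop :=
  ∃ a b : Fin d → ℝ, (∀ i, a i ≤ b i) ∧ B = {x | ∀ i, x i ∈ Set.Icc (a i) (b i)}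

/-- An axis-parallel `k`-flat in `ℝ^d`: the set of points whose coordinates outside some
`k`-element set `J` of coordinate indices are fixed. -/
def IsAxisParallelKFlat {d : ℕ} (k : ℕ) (W : Set (EuclideanSpace ℝ (Fin d))) : Prop :=
  ∃ (J : Finset (Fin d)) (c : Fin d → ℝ), J.card = k ∧
    W = {x | ∀ j ∉ J, x j = c j}

/-- For an ultrafilter on intervals with no point in most intervals, most intervals are disjoint
from most intervals. -/
theorem interval_aux {α : Type*} (U : Ultrafilter α) (a b : α → ℝ)
    (h : ∀ c : ℝ, ¬ ∀ᶠ B in (U : Filter α), a B ≤ c ∧ c ≤ b B) :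
    ∀ᶠ B₀ in (U : Filter α), ∀ᶠ B in (U : Filter α), b B₀ < a B ∨ b B < a B₀ := by
  have key : ∀ c : ℝ, (∀ᶠ B in (U : Filter α), c < a B) ∨ (∀ᶠ B in (U : Filter α), b B < c) := by
    intro c
    rw [← Ultrafilter.eventually_or]
    have := (Ultrafilter.eventually_not (f := U)).2 (h c)
    filter_upwards [this] with B hB
    by_contra! hc
    exact hB hc
  let L : Set ℝ := {c | ∀ᶠ B in (U : Filter α), c < a B}
  have hp := (Ultrafilter.eventually_not (f := U)).2 (h (sSup L))
  filter_upwards [hp] with B₀ hB₀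
  rcases key (b B₀) with h1 | h1
  · filter_upwards [h1] with B hB using Or.inl hB
  rcases key (a B₀) with h2 | h2
  · by_cases hbd : ∀ x ∈ L, x ≤ b B₀
    · exact absurd ⟨le_csSup ⟨b B₀, hbd⟩ h2, csSup_le ⟨_, h2⟩ hbd⟩ hB₀
    · push Not at hbd
      obtain ⟨x, hx, hlt⟩ := hbd
      have hx' : ∀ᶠ B in (U : Filter α), x < a B := hx
      filter_upwards [hx'] with B hB using Or.inl (hlt.trans hB)
  · filter_upwards [h2] with B hB using Or.inr hB

/-- **`(ℵ₀, 2)`-theorem for axis-parallel boxes and axis-parallel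
`k`-flats.** If `F` is a family of axis-parallel boxes in `ℝ^d`, `0 ≤ k < d`, such that
every infinite subfamily contains two boxes both intersected by a single axis-parallel
`k`-flat, then all boxes of `F` can be hit by finitely many axis-parallel `k`-flats. -/
theorem stmt_15 (d k : ℕ) (hd : 1 ≤ d) (hk : k < d)
    (F : Set (Set (EuclideanSpace ℝ (Fin d))))
    (hbox : ∀ B ∈ F, IsBox B)
    (hyp : ∀ G ⊆ F, G.Infinite →
      ∃ B₁ ∈ G, ∃ B₂ ∈ G, B₁ ≠ B₂ ∧
        ∃ W : Set (EuclideanSpace ℝ (Fin d)), IsAxisParallelKFlat k W ∧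
          (B₁ ∩ W).Nonempty ∧ (B₂ ∩ W).Nonempty) :
    ∃ (n : ℕ) (W : Fin n → Set (EuclideanSpace ℝ (Fin d))),
      (∀ m, IsAxisParallelKFlat k (W m)) ∧ ∀ B ∈ F, ∃ m, (B ∩ W m).Nonempty := by
  classical
  let E := EuclideanSpace ℝ (Fin d)
  suffices hs : ∃ T : Set (Set E), T.Finite ∧ (∀ W ∈ T, IsAxisParallelKFlat k W) ∧
      ∀ B ∈ F, ∃ W ∈ T, (B ∩ W).Nonempty by
    obtain ⟨T, hT, hfl, hhit⟩ := hs
    obtain ⟨n, W, -, hW⟩ := hT.fin_param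
    refine ⟨n, W, fun m => hfl _ (hW ▸ Set.mem_range_self m), fun B hB => ?_⟩
    obtain ⟨V, hV, hne⟩ := hhit B hB
    rw [← hW] at hV
    obtain ⟨m, rfl⟩ := hV
    exact ⟨m, hne⟩
  by_contra hcon
  let p : Set (Set E) → Prop := fun s => ∃ T : Set (Set E), T.Finite ∧
    (∀ W ∈ T, IsAxisParallelKFlat k W) ∧ ∀ B ∈ s, B ∈ F → ∃ W ∈ T, (B ∩ W).Nonempty
  let f : Filter (Set E) := Filter.comk p ⟨∅, Set.finite_empty, by simp, by simp⟩
    (by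
      rintro t ⟨T, h1, h2, h3⟩ s hst
      exact ⟨T, h1, h2, fun B hB => h3 B (hst hB)⟩)
    (by
      rintro s ⟨T, h1, h2, h3⟩ t ⟨T', h1', h2', h3'⟩
      refine ⟨T ∪ T', h1.union h1', ?_, ?_⟩
      · rintro W (h | h)
        exacts [h2 W h, h2' W h]
      · rintro B (h | h) hF
        · obtain ⟨W, hW, hn⟩ := h3 B h hF
          exact ⟨W, Or.inl hW, hn⟩
        · obtain ⟨W, hW, hn⟩ := h3' B h hF
          exact ⟨W, Or.inr hW, hn⟩)
  have hf : ∀ s, s ∈ f ↔ p sᶜ := fun s => Filter.mem_comk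
  have hne : f.NeBot := by
    rw [← Filter.empty_mem_iff_bot.not.trans Filter.neBot_iff.symm, hf]
    rintro ⟨T, h1, h2, h3⟩
    exact hcon ⟨T, h1, h2, fun B hB => h3 B (by simp) hB⟩
  let U : Ultrafilter (Set E) := Ultrafilter.of f
  have hUf : ∀ s ∈ f, s ∈ (U : Filter (Set E)) := fun s hs => Ultrafilter.of_le f hs
  have hF : ∀ᶠ B in (U : Filter (Set E)), B ∈ F := by
    apply hUf
    rw [hf]
    exact ⟨∅, Set.finite_empty, by simp, fun B hB hB' => absurd hB' hB⟩
  have hab : ∀ B : Set E, ∃ a b : Fin d → ℝ, B ∈ F →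
      (∀ i, a i ≤ b i) ∧ B = {x : E | ∀ i, x i ∈ Set.Icc (a i) (b i)} := by
    intro B
    by_cases hB : B ∈ F
    · obtain ⟨a, b, h⟩ := hbox B hB
      exact ⟨a, b, fun _ => h⟩
    · exact ⟨0, 0, fun h => absurd h hB⟩
  choose a b hab using hab
  let P : Finset (Fin d) := Finset.univ.filter fun i =>
    ∃ c : ℝ, ∀ᶠ B in (U : Filter (Set E)), a B i ≤ c ∧ c ≤ b B i
  have hP : ∀ i, i ∈ P ↔ ∃ c : ℝ, ∀ᶠ B in (U : Filter (Set E)), a B i ≤ c ∧ c ≤ b B i := by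
    intro i
    simp [P]
  have hcard : P.card < d - k := by
    by_contra! hge
    obtain ⟨Q, hQP, hQ⟩ := Finset.exists_subset_card_eq hge
    have hc : ∀ i, ∃ c : ℝ, i ∈ Q → ∀ᶠ B in (U : Filter (Set E)), a B i ≤ c ∧ c ≤ b B i := by
      intro i
      by_cases hi : i ∈ Q
      · obtain ⟨c, hc⟩ := (hP i).1 (hQP hi)
        exact ⟨c, fun _ => hc⟩
      · exact ⟨0, fun h => absurd h hi⟩
    choose c hc using hc
    let W : Set E := {x | ∀ j ∉ Qᶜ, x j = c j}
    have hW : IsAxisParallelKFlat k W := by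
      refine ⟨Qᶜ, c, ?_, rfl⟩
      rw [Finset.card_compl, hQ, Fintype.card_fin]
      omega
    have hall : ∀ᶠ B in (U : Filter (Set E)), ∀ i ∈ Q, a B i ≤ c i ∧ c i ≤ b B i :=
      (Filter.eventually_all_finset Q).2 hc
    have hnot : ∀ᶠ B in (U : Filter (Set E)), ¬ (B ∩ W).Nonempty := by
      apply hUf
      rw [hf]
      refine ⟨{W}, Set.finite_singleton _, ?_, ?_⟩
      · rintro V rfl
        exact hW
      · intro B hB _
        refine ⟨W, rfl, ?_⟩
        simpa using hB
    obtain ⟨B, hB1, hB2, hB3⟩ := (hF.and (hall.and hnot)).exists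
    apply hB3
    obtain ⟨hle, hEq⟩ := hab B hB1
    refine ⟨WithLp.toLp 2 fun i => if i ∈ Q then c i else a B i, ?_, ?_⟩
    · refine (Set.ext_iff.1 hEq _).2 ?_
      intro i
      by_cases hi : i ∈ Q
      · simpa [hi] using hB2 i hi
      · simpa [hi] using hle i
    · intro j hj
      have hj' : j ∈ Q := by simpa using hj
      simp [hj']
  let R : Set E → Set E → Prop := fun B₀ B => ∀ i, i ∉ P → b B₀ i < a B i ∨ b B i < a B₀ i
  have hR : ∀ᶠ B₀ in (U : Filter (Set E)), ∀ᶠ B in (U : Filter (Set E)), R B₀ B := by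
    have h1 : ∀ᶠ B₀ in (U : Filter (Set E)), ∀ i, i ∉ P → ∀ᶠ B in (U : Filter (Set E)),
        b B₀ i < a B i ∨ b B i < a B₀ i := by
      rw [Filter.eventually_all]
      intro i
      by_cases hi : i ∈ P
      · simp [hi]
      · have := interval_aux U (fun B => a B i) (fun B => b B i)
          (fun c hc => hi ((hP i).2 ⟨c, hc⟩))
        filter_upwards [this] with B hB _ using hB
    filter_upwards [h1] with B₀ hB₀
    rw [Filter.eventually_all]
    intro i
    by_cases hi : i ∈ P
    · simp [hi]
    · filter_upwards [hB₀ i hi] with B hB _ using hB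
  obtain ⟨x, hx1, hx2⟩ := exists_seq_of_forall_finset_exists
    (fun B => B ∈ F ∧ ∀ᶠ B' in (U : Filter (Set E)), R B B') R (by
      intro s hs
      have h2 : ∀ᶠ B' in (U : Filter (Set E)), ∀ B ∈ s, R B B' :=
        (Filter.eventually_all_finset s).2 fun B hB => (hs B hB).2
      obtain ⟨B, hB⟩ := ((hF.and hR).and h2).exists
      exact ⟨B, hB.1, hB.2⟩)
  have hsymm : ∀ B B', R B B' → R B' B := fun B B' h i hi => (h i hi).symm
  have hx3 : ∀ m n, m ≠ n → R (x m) (x n) := by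
    intro m n hmn
    rcases lt_or_gt_of_ne hmn with h | h
    · exact hx2 m n h
    · exact hsymm _ _ (hx2 n m h)
  have hinj : Function.Injective x := by
    intro m n hmn
    by_contra hne'
    have h := hx3 m n hne'
    rw [hmn] at h
    have hex : ∃ i, i ∉ P := by
      by_contra! hall
      have : P = Finset.univ := Finset.eq_univ_iff_forall.2 hall
      rw [this, Finset.card_univ, Fintype.card_fin] at hcard
      omega
    obtain ⟨i, hi⟩ := hex
    have hle := (hab (x n) (hx1 n).1).1 i
    rcases h i hi with h | h <;> linarith
  obtain ⟨B₁, ⟨m, rfl⟩, B₂, ⟨n, rfl⟩, hneB, W, ⟨J, c, hJ, rfl⟩, ⟨y, hy1, hy2⟩, ⟨z, hz1, hz2⟩⟩ :=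
    hyp (Set.range x) (by rintro _ ⟨n, rfl⟩; exact (hx1 n).1) (Set.infinite_range_of_injective hinj)
  have hr := hx3 m n (fun h => hneB (h ▸ rfl))
  have hex : ∃ i, i ∉ P ∧ i ∉ J := by
    by_contra! hall
    have h1 : P ∪ J = Finset.univ := by
      apply Finset.eq_univ_iff_forall.2
      intro i
      by_cases hi : i ∈ P
      · exact Finset.mem_union_left _ hi
      · exact Finset.mem_union_right _ (hall i hi)
    have h2 := Finset.card_union_le P J
    rw [h1, Finset.card_univ, Fintype.card_fin] at h2
    omega
  obtain ⟨i, hiP, hiJ⟩ := hex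
  rw [(hab (x m) (hx1 m).1).2] at hy1
  rw [(hab (x n) (hx1 n).1).2] at hz1
  have e1 := hy1 i
  have e2 := hz1 i
  rw [hy2 i hiJ] at e1
  rw [hz2 i hiJ] at e2
  rcases hr i hiP with h | h
  · linarith [e1.1, e1.2, e2.1, e2.2]
  · linarith [e1.1, e1.2, e2.1, e2.2]
end

section
/- For all integers d ≥ 1 and 0 ≤ k < d there exist positive integers s and t with the following property: for any families F_1, …, F_s of axis-parallel boxes in ℝ^d, each of cardinality t, if for all i ≠ j every box of F_i and every box of F_j can be simultaneously intersected by a single axis-parallel k-flat, then there exist an index i and two distinct boxes in F_i that can be simultaneously intersected by a single axis-parallel k-flat. -/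
/-- Two-colour Ramsey theorem for a symmetric relation. -/
theorem ramsey_two {α : Type*} (R : α → α → Prop) (hR : ∀ x y, R x y → R y x) (a b : ℕ) :
    ∃ N : ℕ, ∀ X : Finset α, N ≤ X.card →
      (∃ T ⊆ X, a ≤ T.card ∧ ∀ x ∈ T, ∀ y ∈ T, x ≠ y → R x y) ∨
      (∃ T ⊆ X, b ≤ T.card ∧ ∀ x ∈ T, ∀ y ∈ T, x ≠ y → ¬ R x y) := by
  classical
  induction a generalizing b with
  | zero => exact ⟨0, fun X _ => Or.inl ⟨∅, by simp, by simp, by simp⟩⟩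
  | succ a iha =>
    induction b with
    | zero => exact ⟨0, fun X _ => Or.inr ⟨∅, by simp, by simp, by simp⟩⟩
    | succ b ihb =>
      obtain ⟨N₁, h₁⟩ := iha (b + 1)
      obtain ⟨N₂, h₂⟩ := ihb
      refine ⟨N₁ + N₂ + 1, fun X hX => ?_⟩
      obtain ⟨x, hx⟩ : X.Nonempty := by
        rw [← Finset.card_pos]; omega
      have hc := Finset.card_filter_add_card_filter_not (s := X.erase x) (fun y => R x y)
      rw [Finset.card_erase_of_mem hx] at hc
      have hsub : ∀ (p : α → Prop) [DecidablePred p], (X.erase x).filter p ⊆ X := fun p _ =>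
        (Finset.filter_subset _ _).trans (Finset.erase_subset _ _)
      by_cases h : N₁ ≤ ((X.erase x).filter (fun y => R x y)).card
      · rcases h₁ _ h with ⟨T, hT, hcard, hp⟩ | ⟨T, hT, hcard, hp⟩
        · have hTx : ∀ y ∈ T, y ≠ x ∧ R x y := fun y hy => by
            have := hT hy
            simp only [Finset.mem_filter, Finset.mem_erase] at this
            exact ⟨this.1.1, this.2⟩
          refine Or.inl ⟨insert x T, Finset.insert_subset hx (hT.trans (hsub _)), ?_, ?_⟩
          · rw [Finset.card_insert_of_notMem (fun h => (hTx x h).1 rfl)]; omega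
          · intro y hy z hz hyz
            rw [Finset.mem_insert] at hy hz
            rcases hy with rfl | hy <;> rcases hz with rfl | hz
            · exact absurd rfl hyz
            · exact (hTx z hz).2
            · exact hR _ _ (hTx y hy).2
            · exact hp y hy z hz hyz
        · exact Or.inr ⟨T, hT.trans (hsub _), hcard, hp⟩
      · have h' : N₂ ≤ ((X.erase x).filter (fun y => ¬ R x y)).card := by omega
        rcases h₂ _ h' with ⟨T, hT, hcard, hp⟩ | ⟨T, hT, hcard, hp⟩
        · exact Or.inl ⟨T, hT.trans (hsub _), hcard, hp⟩
        · have hTx : ∀ y ∈ T, y ≠ x ∧ ¬ R x y := fun y hy => by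
            have := hT hy
            simp only [Finset.mem_filter, Finset.mem_erase] at this
            exact ⟨this.1.1, this.2⟩
          refine Or.inr ⟨insert x T, Finset.insert_subset hx (hT.trans (hsub _)), ?_, ?_⟩
          · rw [Finset.card_insert_of_notMem (fun h => (hTx x h).1 rfl)]; omega
          · intro y hy z hz hyz
            rw [Finset.mem_insert] at hy hz
            rcases hy with rfl | hy <;> rcases hz with rfl | hz
            · exact absurd rfl hyz
            · exact (hTx z hz).2
            · exact fun h => (hTx y hy).2 (hR _ _ h)
            · exact hp y hy z hz hyz

/-- Simultaneous homogeneity for finitely many symmetric relations. -/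
theorem ramsey_many {α ι : Type*} (S : Finset ι) (R : ι → α → α → Prop)
    (hR : ∀ i x y, R i x y → R i y x) (n : ℕ) :
    ∃ N : ℕ, ∀ X : Finset α, N ≤ X.card → ∃ T ⊆ X, n ≤ T.card ∧
      ∀ i ∈ S, (∀ x ∈ T, ∀ y ∈ T, x ≠ y → R i x y) ∨
        (∀ x ∈ T, ∀ y ∈ T, x ≠ y → ¬ R i x y) := by
  classical
  induction S using Finset.induction_on with
  | empty => exact ⟨n, fun X hX => ⟨X, subset_rfl, hX, by simp⟩⟩
  | insert i S hi ih =>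
    obtain ⟨N, hN⟩ := ih
    obtain ⟨M, hM⟩ := ramsey_two (R i) (hR i) N N
    refine ⟨M, fun X hX => ?_⟩
    have key : ∃ T ⊆ X, N ≤ T.card ∧ ((∀ x ∈ T, ∀ y ∈ T, x ≠ y → R i x y) ∨
        (∀ x ∈ T, ∀ y ∈ T, x ≠ y → ¬ R i x y)) := by
      rcases hM X hX with ⟨T, h1, h2, h3⟩ | ⟨T, h1, h2, h3⟩
      · exact ⟨T, h1, h2, Or.inl h3⟩
      · exact ⟨T, h1, h2, Or.inr h3⟩
    obtain ⟨T, hTX, hTc, hT⟩ := key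
    obtain ⟨U, hUT, hUc, hU⟩ := hN T hTc
    refine ⟨U, hUT.trans hTX, hUc, fun j hj => ?_⟩
    rcases Finset.mem_insert.1 hj with rfl | hj
    · rcases hT with hT | hT
      · exact Or.inl fun x hx y hy => hT x (hUT hx) y (hUT hy)
      · exact Or.inr fun x hx y hy => hT x (hUT hx) y (hUT hy)
    · exact hU j hj

/-- Two finite families of pairwise disjoint intervals have few crossing intersections. -/
theorem few_crossings {α : Type*} (a b : α → ℝ) (T U : Finset α)
    (hT : ∀ x ∈ T, ∀ y ∈ T, x ≠ y → ¬ (a x ≤ b y ∧ a y ≤ b x))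
    (hU : ∀ x ∈ U, ∀ y ∈ U, x ≠ y → ¬ (a x ≤ b y ∧ a y ≤ b x)) :
    ((T ×ˢ U).filter (fun p => a p.1 ≤ b p.2 ∧ a p.2 ≤ b p.1)).card ≤ T.card + U.card := by
  classical
  have h1 : ((T ×ˢ U).filter (fun p => a p.2 ≤ a p.1 ∧ a p.1 ≤ b p.2)).card ≤ T.card := by
    apply Finset.card_le_card_of_injOn Prod.fst
    · intro p hp
      simp only [Finset.coe_filter, Finset.mem_product, Set.mem_ofPred_eq] at hp
      exact hp.1.1
    · rintro ⟨x, y⟩ hp ⟨x', y'⟩ hq h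
      simp only [Finset.coe_filter, Finset.mem_product, Set.mem_ofPred_eq] at hp hq h
      subst h
      by_contra hne
      exact hU y hp.1.2 y' hq.1.2 (fun h => hne (by rw [h]))
        ⟨hp.2.1.trans hq.2.2, hq.2.1.trans hp.2.2⟩
  have h2 : ((T ×ˢ U).filter (fun p => a p.1 ≤ a p.2 ∧ a p.2 ≤ b p.1)).card ≤ U.card := by
    apply Finset.card_le_card_of_injOn Prod.snd
    · intro p hp
      simp only [Finset.coe_filter, Finset.mem_product, Set.mem_ofPred_eq] at hp
      exact hp.1.2
    · rintro ⟨x, y⟩ hp ⟨x', y'⟩ hq h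
      simp only [Finset.coe_filter, Finset.mem_product, Set.mem_ofPred_eq] at hp hq h
      subst h
      by_contra hne
      exact hT x hp.1.1 x' hq.1.1 (fun h => hne (by rw [h]))
        ⟨hp.2.1.trans hq.2.2, hq.2.1.trans hp.2.2⟩
  refine le_trans (Finset.card_le_card ?_) ((Finset.card_union_le _ _).trans (add_le_add h1 h2))
  intro p hp
  simp only [Finset.mem_union, Finset.mem_filter] at hp ⊢
  rcases le_total (a p.1) (a p.2) with h | h
  · exact Or.inr ⟨hp.1, h, hp.2.2⟩
  · exact Or.inl ⟨hp.1, h, hp.2.1⟩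

/-- Two boxes admit a common axis-parallel `k`-flat iff they overlap in `d - k` coordinates. -/
theorem flat_iff {d k : ℕ} (hk : k < d) (a b a' b' : Fin d → ℝ) (hab : ∀ i, a i ≤ b i)
    (hab' : ∀ i, a' i ≤ b' i) :
    (∃ W : Set (EuclideanSpace ℝ (Fin d)), IsAxisParallelKFlat k W ∧
      ({x : EuclideanSpace ℝ (Fin d) | ∀ i, x i ∈ Set.Icc (a i) (b i)} ∩ W).Nonempty ∧
      ({x : EuclideanSpace ℝ (Fin d) | ∀ i, x i ∈ Set.Icc (a' i) (b' i)} ∩ W).Nonempty) ↔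
    d - k ≤ (Finset.univ.filter (fun i => a i ≤ b' i ∧ a' i ≤ b i)).card := by
  classical
  constructor
  · rintro ⟨W, ⟨J, c, hJ, rfl⟩, ⟨x, hx, hxW⟩, ⟨y, hy, hyW⟩⟩
    have hc : (Jᶜ).card = d - k := by rw [Finset.card_compl, hJ, Fintype.card_fin]
    rw [← hc]
    apply Finset.card_le_card
    intro j hj
    rw [Finset.mem_compl] at hj
    have hxy : x j = y j := (hxW j hj).trans (hyW j hj).symm
    simp only [Finset.mem_filter, Finset.mem_univ, true_and]
    have h1 := hx j
    have h2 := hy j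
    rw [← hxy] at h2
    exact ⟨h1.1.trans h2.2, h2.1.trans h1.2⟩
  · intro h
    obtain ⟨K, hK, hKc⟩ := Finset.exists_subset_card_eq h
    have hm : ∀ j ∈ K, a j ≤ b' j ∧ a' j ≤ b j := fun j hj => by
      simpa using hK hj
    refine ⟨_, ⟨Kᶜ, fun j => max (a j) (a' j), ?_, rfl⟩,
      ⟨WithLp.toLp 2 (fun j => if j ∈ K then max (a j) (a' j) else a j), ?_, ?_⟩,
      ⟨WithLp.toLp 2 (fun j => if j ∈ K then max (a j) (a' j) else a' j), ?_, ?_⟩⟩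
    · rw [Finset.card_compl, hKc, Fintype.card_fin]; omega
    · intro j
      by_cases hj : j ∈ K
      · simp [hj, hab j, (hm j hj).2]
      · simp [hj, hab j]
    · intro j hj
      rw [Finset.mem_compl, not_not] at hj
      simp [hj]
    · intro j
      by_cases hj : j ∈ K
      · simp [hj, hab' j, (hm j hj).1]
      · simp [hj, hab' j]
    · intro j hj
      rw [Finset.mem_compl, not_not] at hj
      simp [hj]

/-- **colorful Helly-type claim for boxes and axis-parallel `k`-flats.**
For all `d ≥ 1` and `0 ≤ k < d` there are positive integers `s`, `t` such that: given `s`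
families, each of `t` axis-parallel boxes in `ℝ^d`, if every two boxes from different
families can be intersected by a single axis-parallel `k`-flat, then some two distinct
boxes from one family can be intersected by a single axis-parallel `k`-flat. -/
theorem stmt_16 (d k : ℕ) (hd : 1 ≤ d) (hk : k < d) :
    ∃ s t : ℕ, 0 < s ∧ 0 < t ∧
      ∀ F : Fin s → Finset (Set (EuclideanSpace ℝ (Fin d))),
        (∀ i, ∀ B ∈ F i, IsBox B) →
        (∀ i, (F i).card = t) →
        (∀ i j, i ≠ j → ∀ B₁ ∈ F i, ∀ B₂ ∈ F j,
          ∃ W : Set (EuclideanSpace ℝ (Fin d)), IsAxisParallelKFlat k W ∧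
            (B₁ ∩ W).Nonempty ∧ (B₂ ∩ W).Nonempty) →
        ∃ i, ∃ B₁ ∈ F i, ∃ B₂ ∈ F i, B₁ ≠ B₂ ∧
          ∃ W : Set (EuclideanSpace ℝ (Fin d)), IsAxisParallelKFlat k W ∧
            (B₁ ∩ W).Nonempty ∧ (B₂ ∩ W).Nonempty := by
  classical
  have hch : ∀ B : Set (EuclideanSpace ℝ (Fin d)), ∃ a b : Fin d → ℝ, IsBox B →
      (∀ i, a i ≤ b i) ∧ B = {x | ∀ i, x i ∈ Set.Icc (a i) (b i)} := by
    intro B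
    by_cases hB : IsBox B
    · obtain ⟨a, b, h⟩ := hB
      exact ⟨a, b, fun _ => h⟩
    · exact ⟨0, 0, fun h => absurd h hB⟩
  choose a b hbox using hch
  -- the overlap set of two boxes
  let M : Set (EuclideanSpace ℝ (Fin d)) → Set (EuclideanSpace ℝ (Fin d)) → Finset (Fin d) :=
    fun A B => Finset.univ.filter (fun i => a A i ≤ b B i ∧ a B i ≤ b A i)
  have hM : ∀ A B i, i ∈ M A B ↔ (a A i ≤ b B i ∧ a B i ≤ b A i) := fun A B i => by
    simp [M]
  have hflat : ∀ A B, IsBox A → IsBox B →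
      ((∃ W : Set (EuclideanSpace ℝ (Fin d)), IsAxisParallelKFlat k W ∧
            (A ∩ W).Nonempty ∧ (B ∩ W).Nonempty) ↔ d - k ≤ (M A B).card) := by
    intro A B hA hB
    have := flat_iff hk (a A) (b A) (a B) (b B) (hbox A hA).1 (hbox B hB).1
    rw [← (hbox A hA).2, ← (hbox B hB).2] at this
    exact this
  obtain ⟨N, hN⟩ := ramsey_many (Finset.univ : Finset (Fin d))
    (fun i A B => a A i ≤ b B i ∧ a B i ≤ b A i) (fun i A B h => ⟨h.2, h.1⟩) (2 * d + 1)
  refine ⟨2 ^ d + 1, N + 1, Nat.succ_pos _, Nat.succ_pos _, fun F hF hcard hcross => ?_⟩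
  by_contra hcon
  have hin : ∀ i, ∀ A ∈ F i, ∀ B ∈ F i, A ≠ B → (M A B).card < d - k := by
    intro i A hA B hB hne
    by_contra h
    exact hcon ⟨i, A, hA, B, hB, hne, (hflat A B (hF i A hA) (hF i B hB)).2 (not_lt.1 h)⟩
  have hT : ∀ i, ∃ T ⊆ F i, T.card = 2 * d + 1 ∧
      ∀ l, (∀ x ∈ T, ∀ y ∈ T, x ≠ y → l ∈ M x y) ∨
        (∀ x ∈ T, ∀ y ∈ T, x ≠ y → l ∉ M x y) := by
    intro i
    obtain ⟨T, h1, h2, h3⟩ := hN (F i) (by rw [hcard i]; omega)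
    obtain ⟨U, hU, hUc⟩ := Finset.exists_subset_card_eq h2
    refine ⟨U, hU.trans h1, hUc, fun l => ?_⟩
    simp only [hM]
    rcases h3 l (Finset.mem_univ l) with h | h
    · exact Or.inl fun x hx y hy => h x (hU hx) y (hU hy)
    · exact Or.inr fun x hx y hy => h x (hU hx) y (hU hy)
  choose T hTF hTc hTh using hT
  let D : Fin (2 ^ d + 1) → Finset (Fin d) := fun i =>
    Finset.univ.filter (fun l => ∀ x ∈ T i, ∀ y ∈ T i, x ≠ y → l ∉ M x y)
  obtain ⟨i, j, hij, hD⟩ := Fintype.exists_ne_map_eq_of_card_lt D (by simp)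
  have hDmem : ∀ i l, l ∈ D i ↔ ∀ x ∈ T i, ∀ y ∈ T i, x ≠ y → l ∉ M x y := fun i l => by
    simp [D]
  -- few coordinates are outside `D i`
  have hDc : ((D i)ᶜ).card < d - k := by
    obtain ⟨A, hA, B, hB, hne⟩ := Finset.one_lt_card.1 (show 1 < (T i).card by rw [hTc]; omega)
    refine lt_of_le_of_lt (Finset.card_le_card ?_) (hin i A (hTF i hA) B (hTF i hB) hne)
    intro l hl
    rw [Finset.mem_compl, hDmem] at hl
    exact (hTh i l).resolve_right hl A hA B hB hne
  -- a pair with no overlap in `D i`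
  have hpair : ∃ p ∈ T i ×ˢ T j, ∀ l ∈ D i, l ∉ M p.1 p.2 := by
    by_contra hno
    push Not at hno
    have hsub : T i ×ˢ T j ⊆ (D i).biUnion (fun l => (T i ×ˢ T j).filter
        (fun p => a p.1 l ≤ b p.2 l ∧ a p.2 l ≤ b p.1 l)) := by
      intro p hp
      obtain ⟨l, hl, hlM⟩ := hno p hp
      exact Finset.mem_biUnion.2 ⟨l, hl, Finset.mem_filter.2 ⟨hp, (hM _ _ _).1 hlM⟩⟩
    have h1 := (Finset.card_le_card hsub).trans
      (Finset.card_biUnion_le_card_mul (D i) _ ((T i).card + (T j).card) (fun l hl => by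
        apply few_crossings (fun x => a x l) (fun x => b x l)
        · intro x hx y hy hxy h
          exact (hDmem i l).1 hl x hx y hy hxy ((hM _ _ _).2 h)
        · intro x hx y hy hxy h
          exact (hDmem j l).1 (hD ▸ hl) x hx y hy hxy ((hM _ _ _).2 h)))
    rw [Finset.card_product, hTc, hTc] at h1
    have h2 : (D i).card ≤ d := by simpa using Finset.card_le_univ (D i)
    nlinarith
  obtain ⟨⟨A, B⟩, hp, hAB⟩ := hpair
  obtain ⟨hA, hB⟩ := Finset.mem_product.1 hp
  have h1 := (hflat A B (hF i A (hTF i hA)) (hF j B (hTF j hB))).1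
    (hcross i j hij A (hTF i hA) B (hTF j hB))
  have h2 : M A B ⊆ (D i)ᶜ := by
    intro l hl
    rw [Finset.mem_compl]
    exact fun h => hAB l h hl
  have := Finset.card_le_card h2
  omega
end

section
/- For all integers d ≥ 1, 0 ≤ k < d, and p ≥ 2 there exists a positive integer C with the following property: if F is a family of axis-parallel boxes in ℝ^d such that among every p distinct members of F there are two that can be simultaneously intersected by a single axis-parallel k-flat, then there exist at most C axis-parallel k-flats in ℝ^d such that every box of F intersects at least one of them. -/
/-- Finite family `s` is hit by at most `N` flats fixing `m` coordinates of `T`. -/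
def HitBy {d : ℕ} {ι : Type*} (lo hi : ι → Fin d → ℝ) (T : Finset (Fin d)) (m : ℕ)
    (s : Finset ι) (N : ℕ) : Prop :=
  ∃ P : Finset (Finset (Fin d) × (Fin d → ℝ)), P.card ≤ N ∧
    (∀ f ∈ P, f.1 ⊆ T ∧ f.1.card = m) ∧
    ∀ i ∈ s, ∃ f ∈ P, ∀ t ∈ f.1, lo i t ≤ f.2 t ∧ f.2 t ≤ hi i t

/-- Number of coordinates in `T` in which the boxes meet is at least `m`. -/
def GoodPair {d : ℕ} {ι : Type*} (lo hi : ι → Fin d → ℝ) (T : Finset (Fin d)) (m : ℕ)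
    (i j : ι) : Prop :=
  ∃ S : Finset (Fin d), S ⊆ T ∧ m ≤ S.card ∧ ∀ t ∈ S, lo i t ≤ hi j t ∧ lo j t ≤ hi i t

/-- Among every `p` members two form a good pair. -/
def PGood {d : ℕ} {ι : Type*} (lo hi : ι → Fin d → ℝ) (T : Finset (Fin d)) (m p : ℕ)
    (s : Finset ι) : Prop :=
  ∀ G : Finset ι, G ⊆ s → G.card = p → ∃ i ∈ G, ∃ j ∈ G, i ≠ j ∧ GoodPair lo hi T m i j

section helpers
variable {d : ℕ} {ι : Type*} {lo hi : ι → Fin d → ℝ} {T : Finset (Fin d)} {m p : ℕ}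

lemma HitBy.mono {s s' : Finset ι} {N N' : ℕ} (h : HitBy lo hi T m s N) (hs : s' ⊆ s)
    (hN : N ≤ N') : HitBy lo hi T m s' N' := by
  obtain ⟨P, h1, h2, h3⟩ := h
  exact ⟨P, h1.trans hN, h2, fun i hi => h3 i (hs hi)⟩

lemma PGood.mono {s s' : Finset ι} (h : PGood lo hi T m p s) (hs : s' ⊆ s) :
    PGood lo hi T m p s' := fun G hG => h G (hG.trans hs)

lemma HitBy.cover {s s1 s2 : Finset ι} {N1 N2 : ℕ} (h1 : HitBy lo hi T m s1 N1)
    (h2 : HitBy lo hi T m s2 N2) (hs : ∀ i ∈ s, i ∈ s1 ∨ i ∈ s2) :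
    HitBy lo hi T m s (N1 + N2) := by
  classical
  obtain ⟨P, a1, a2, a3⟩ := h1
  obtain ⟨Q, b1, b2, b3⟩ := h2
  refine ⟨P ∪ Q, (Finset.card_union_le _ _).trans (by omega), ?_, ?_⟩
  · intro f hf
    rcases Finset.mem_union.1 hf with h | h
    · exact a2 f h
    · exact b2 f h
  · intro i hi
    rcases hs i hi with h | h
    · obtain ⟨f, hf, h'⟩ := a3 i h
      exact ⟨f, Finset.mem_union_left _ hf, h'⟩
    · obtain ⟨f, hf, h'⟩ := b3 i h
      exact ⟨f, Finset.mem_union_right _ hf, h'⟩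

lemma HitBy.lift {s : Finset ι} {N : ℕ} {t : Fin d} (ht : t ∈ T) {x : ℝ}
    (h : HitBy lo hi (T.erase t) m s N) (hx : ∀ i ∈ s, lo i t ≤ x ∧ x ≤ hi i t) :
    HitBy lo hi T (m + 1) s N := by
  classical
  obtain ⟨P, a1, a2, a3⟩ := h
  refine ⟨P.image (fun f => (insert t f.1, Function.update f.2 t x)),
    Finset.card_image_le.trans a1, ?_, ?_⟩
  · intro f hf
    obtain ⟨g, hg, rfl⟩ := Finset.mem_image.1 hf
    obtain ⟨b1, b2⟩ := a2 g hg
    have : t ∉ g.1 := fun h => by simpa using b1 h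
    refine ⟨?_, by simp [Finset.card_insert_of_notMem this, b2]⟩
    exact Finset.insert_subset ht (b1.trans (Finset.erase_subset _ _))
  · intro i hi'
    obtain ⟨f, hf, h'⟩ := a3 i hi'
    refine ⟨_, Finset.mem_image_of_mem _ hf, ?_⟩
    intro u hu
    by_cases hut : u = t
    · subst hut
      simpa using hx i hi'
    · have : u ∈ f.1 := by simpa [hut] using hu
      simpa [Function.update_of_ne hut] using h' u this

lemma PGood.link {s : Finset ι} {t : Fin d}
    (h : PGood lo hi T (m + 1) p s) : PGood lo hi (T.erase t) m p s := by
  intro G hG hc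
  obtain ⟨i, hi1, j, hj, hij, S, h1, h2, h3⟩ := h G hG hc
  refine ⟨i, hi1, j, hj, hij, S.erase t, Finset.erase_subset_erase _ h1, ?_,
    fun u hu => h3 u (Finset.mem_of_mem_erase hu)⟩
  have := Finset.pred_card_le_card_erase (s := S) (a := t)
  omega

/-- Threshold value. -/
lemma threshold {s : Finset ι} {N : ℕ} (t : Fin d) (h : ¬ HitBy lo hi T m s N) :
    ∃ x : ℝ, ¬ HitBy lo hi T m (s.filter (fun i => hi i t ≤ x)) N ∧
      HitBy lo hi T m (s.filter (fun i => hi i t < x)) N := by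
  classical
  let V : Finset ℝ := (s.image (fun i => hi i t)).filter
    (fun x => ¬ HitBy lo hi T m (s.filter (fun i => hi i t ≤ x)) N)
  have hs : s.Nonempty := by
    by_contra hne
    rw [Finset.not_nonempty_iff_eq_empty] at hne
    subst hne
    exact h ⟨∅, by simp, by simp, by simp⟩
  have key : ∀ s' : Finset ι, s' ⊆ s → ¬ HitBy lo hi T m s' N →
      ∃ j ∈ s', hi j t ∈ V := by
    intro s' hs' hn
    have hs0 : s'.Nonempty := by
      by_contra hne
      rw [Finset.not_nonempty_iff_eq_empty] at hne
      subst hne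
      exact hn ⟨∅, by simp, by simp, by simp⟩
    obtain ⟨j, hj, hmax⟩ := s'.exists_max_image (fun i => hi i t) hs0
    refine ⟨j, hj, Finset.mem_filter.2 ⟨Finset.mem_image_of_mem _ (hs' hj), fun hh => hn ?_⟩⟩
    exact hh.mono (fun i hi' => Finset.mem_filter.2 ⟨hs' hi', hmax i hi'⟩) le_rfl
  obtain ⟨j0, -, hj0⟩ := key s subset_rfl h
  obtain ⟨x, hx, hmin⟩ := V.exists_min_image id ⟨_, hj0⟩
  refine ⟨x, (Finset.mem_filter.1 hx).2, ?_⟩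
  by_contra hcon
  obtain ⟨j, hj, hjV⟩ := key _ (Finset.filter_subset _ _) hcon
  have h1 := hmin _ hjV
  have h2 := (Finset.mem_filter.1 hj).2
  simp only [id] at h1
  linarith

/-- Transversal of subgroups separated in coordinate `t`. -/
lemma separate {α : Type*} [DecidableEq α] {N C' : ℕ} (t : Fin d) (s : Finset ι)
    (hC : ∀ x : ℝ, HitBy lo hi T m (s.filter (fun i => lo i t ≤ x ∧ x ≤ hi i t)) C') :
    ∀ (r : ℕ) (A : Finset α) (G : α → Finset ι), A.card = r → (∀ a ∈ A, G a ⊆ s) →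
      (∀ a ∈ A, ¬ HitBy lo hi T m (G a) (r * (N + C'))) →
      ∃ H : α → Finset ι, (∀ a ∈ A, H a ⊆ G a ∧ ¬ HitBy lo hi T m (H a) N) ∧
        ∀ a ∈ A, ∀ b ∈ A, a ≠ b → ∀ i ∈ H a, ∀ j ∈ H b, hi i t < lo j t ∨ hi j t < lo i t := by
  intro r
  induction r with
  | zero =>
    intro A G hA _ _
    have : A = ∅ := Finset.card_eq_zero.1 hA
    subst this
    exact ⟨G, by simp, by simp⟩
  | succ r ih =>
    intro A G hA hG hN
    have hN0 : ∀ a ∈ A, ¬ HitBy lo hi T m (G a) N := fun a ha h =>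
      hN a ha (h.mono subset_rfl (by nlinarith))
    have hth : ∀ a, ∃ x : ℝ, a ∈ A →
        (¬ HitBy lo hi T m ((G a).filter (fun i => hi i t ≤ x)) N ∧
        HitBy lo hi T m ((G a).filter (fun i => hi i t < x)) N) := by
      intro a
      by_cases ha : a ∈ A
      · obtain ⟨x, hx⟩ := threshold t (hN0 a ha)
        exact ⟨x, fun _ => hx⟩
      · exact ⟨0, fun h => absurd h ha⟩
    choose x hx using hth
    have hne : A.Nonempty := Finset.card_pos.1 (by omega)
    obtain ⟨a, ha, hmin⟩ := A.exists_min_image x hne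
    obtain ⟨H, hH1, hH2⟩ := ih (A.erase a) (fun b => (G b).filter (fun i => x a < lo i t))
      (by rw [Finset.card_erase_of_mem ha]; omega)
      (fun b hb => (Finset.filter_subset _ _).trans (hG b (Finset.mem_of_mem_erase hb)))
      (by
        intro b hb hhit
        have hb' := Finset.mem_of_mem_erase hb
        apply hN b hb'
        have h1 := ((hx b hb').2.cover (s := (G b).filter (fun i => lo i t ≤ x a)) (hC (x a)) (by
          intro i hi'
          obtain ⟨hi1, hi2⟩ := Finset.mem_filter.1 hi'
          rcases lt_or_ge (hi i t) (x a) with h | h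
          · exact Or.inl (Finset.mem_filter.2 ⟨hi1, h.trans_le (hmin b hb')⟩)
          · exact Or.inr (Finset.mem_filter.2 ⟨hG b hb' hi1, hi2, h⟩))).cover (s := G b) hhit (by
            intro i hi'
            rcases lt_or_ge (x a) (lo i t) with h | h
            · exact Or.inr (Finset.mem_filter.2 ⟨hi', h⟩)
            · exact Or.inl (Finset.mem_filter.2 ⟨hi', h⟩))
        exact h1.mono subset_rfl (by ring_nf; omega))
    refine ⟨Function.update H a ((G a).filter (fun i => hi i t ≤ x a)), ?_, ?_⟩
    · intro b hb
      by_cases hba : b = a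
      · subst hba
        simpa using (hx b hb).1
      · rw [Function.update_of_ne hba]
        have := hH1 b (Finset.mem_erase.2 ⟨hba, hb⟩)
        exact ⟨this.1.trans (Finset.filter_subset _ _), this.2⟩
    · have aux : ∀ c ∈ A, c ≠ a → ∀ i ∈ (G a).filter (fun i => hi i t ≤ x a), ∀ j ∈ H c,
          hi i t < lo j t := by
        intro c hc hca i hi' j hj
        have h1 := (Finset.mem_filter.1 hi').2
        have h2 := (Finset.mem_filter.1 ((hH1 c (Finset.mem_erase.2 ⟨hca, hc⟩)).1 hj)).2
        exact lt_of_le_of_lt h1 h2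
      intro b hb c hc hbc i hi' j hj
      by_cases hba : b = a
      · subst hba
        rw [Function.update_self] at hi'
        rw [Function.update_of_ne (Ne.symm hbc)] at hj
        exact Or.inl (aux c hc (Ne.symm hbc) i hi' j hj)
      · rw [Function.update_of_ne hba] at hi'
        by_cases hca : c = a
        · subst hca
          rw [Function.update_self] at hj
          exact Or.inr (aux b hb hba j hj i hi')
        · rw [Function.update_of_ne hca] at hj
          exact hH2 b (Finset.mem_erase.2 ⟨hba, hb⟩) c (Finset.mem_erase.2 ⟨hca, hc⟩) hbc i hi' j hj

end helpers

/-- Separation in all coordinates of `U`. -/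
lemma separate_all {d : ℕ} (T : Finset (Fin d)) (m p C' : ℕ) (U : Finset (Fin d)) :
    U ⊆ T → ∀ N : ℕ, ∃ M : ℕ, ∀ (ι : Type) (lo hi : ι → Fin d → ℝ) (s : Finset ι),
      (∀ t ∈ T, ∀ x : ℝ, HitBy lo hi T m (s.filter (fun i => lo i t ≤ x ∧ x ≤ hi i t)) C') →
      ¬ HitBy lo hi T m s M →
      ∃ G : Fin p → Finset ι, (∀ a, G a ⊆ s ∧ ¬ HitBy lo hi T m (G a) N) ∧
        ∀ a b, a ≠ b → ∀ i ∈ G a, ∀ j ∈ G b, ∀ t ∈ U, hi i t < lo j t ∨ hi j t < lo i t := by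
  classical
  induction U using Finset.induction_on with
  | empty =>
    intro _ N
    exact ⟨N, fun ι lo hi s _ h => ⟨fun _ => s, fun _ => ⟨subset_rfl, h⟩, by simp⟩⟩
  | insert t U htU ih =>
    intro hU N
    obtain ⟨M, hM⟩ := ih ((Finset.subset_insert _ _).trans hU) (p * (N + C'))
    refine ⟨M, fun ι lo hi s hC h => ?_⟩
    obtain ⟨G, hG1, hG2⟩ := hM ι lo hi s hC h
    obtain ⟨H, hH1, hH2⟩ := separate (N := N) (C' := C') t s
      (hC t (hU (Finset.mem_insert_self _ _))) p (Finset.univ : Finset (Fin p)) G (by simp)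
      (fun a _ => (hG1 a).1) (fun a _ => (hG1 a).2)
    refine ⟨H, fun a => ⟨(hH1 a (Finset.mem_univ _)).1.trans (hG1 a).1,
      (hH1 a (Finset.mem_univ _)).2⟩, ?_⟩
    intro a b hab i hi' j hj u hu
    rcases Finset.mem_insert.1 hu with rfl | hu
    · exact hH2 a (Finset.mem_univ _) b (Finset.mem_univ _) hab i hi' j hj
    · exact hG2 a b hab i ((hH1 a (Finset.mem_univ _)).1 hi') j
        ((hH1 b (Finset.mem_univ _)).1 hj) u hu

/-- Finite version. -/
lemma finite_version {d : ℕ} (p m : ℕ) : ∀ (T : Finset (Fin d)), m ≤ T.card →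
    ∃ C : ℕ, ∀ (ι : Type) (lo hi : ι → Fin d → ℝ), (∀ i t, lo i t ≤ hi i t) →
      ∀ s : Finset ι, PGood lo hi T m p s → HitBy lo hi T m s C := by
  classical
  induction m with
  | zero =>
    intro T _
    exact ⟨1, fun ι lo hi _ s _ => ⟨{(∅, 0)}, by simp, by simp, by simp⟩⟩
  | succ m ih =>
    intro T hT
    have : ∀ t : Fin d, ∃ C : ℕ, t ∈ T → ∀ (ι : Type) (lo hi : ι → Fin d → ℝ),
        (∀ i t, lo i t ≤ hi i t) →
        ∀ s : Finset ι, PGood lo hi (T.erase t) m p s → HitBy lo hi (T.erase t) m s C := by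
      intro t
      by_cases ht : t ∈ T
      · obtain ⟨C, hC⟩ := ih (T.erase t) (by rw [Finset.card_erase_of_mem ht]; omega)
        exact ⟨C, fun _ => hC⟩
      · exact ⟨0, fun h => absurd h ht⟩
    choose C hC using this
    obtain ⟨M, hM⟩ := separate_all T (m + 1) p (∑ t, C t) T subset_rfl 0
    refine ⟨M, fun ι lo hi hle s hs => ?_⟩
    by_contra hcon
    obtain ⟨G, hG1, hG2⟩ := hM ι lo hi s (by
      intro t ht x
      refine HitBy.lift ht (x := x) (N := _) ?_ (fun i hi' => (Finset.mem_filter.1 hi').2)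
      refine (hC t ht ι lo hi hle _ ?_).mono subset_rfl
        (Finset.single_le_sum (f := C) (fun _ _ => Nat.zero_le _) (Finset.mem_univ t))
      exact (hs.mono (Finset.filter_subset _ _)).link) hcon
    have hne : ∀ a, ∃ i, i ∈ G a := by
      intro a
      by_contra hh
      push Not at hh
      exact (hG1 a).2 ⟨∅, by simp, by simp, fun i hi' => absurd hi' (hh i)⟩
    choose g hg using hne
    obtain ⟨t0, ht0⟩ : T.Nonempty := Finset.card_pos.1 (by omega)
    have hinj : Function.Injective g := by
      intro a b hab
      by_contra hne
      have := hG2 a b hne (g a) (hg a) (g b) (hg b) t0 ht0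
      rw [hab] at this
      have := hle (g b) t0
      rcases ‹_ ∨ _› with h | h <;> linarith
    obtain ⟨i, hi1, j, hj1, hij, S, hS1, hS2, hS3⟩ := hs (Finset.univ.image g)
      (by
        intro i hi'
        obtain ⟨a, -, rfl⟩ := Finset.mem_image.1 hi'
        exact (hG1 a).1 (hg a))
      (by rw [Finset.card_image_of_injective _ hinj]; simp)
    obtain ⟨a, -, rfl⟩ := Finset.mem_image.1 hi1
    obtain ⟨b, -, rfl⟩ := Finset.mem_image.1 hj1
    have hab : a ≠ b := fun h => hij (by rw [h])
    obtain ⟨u, hu⟩ : S.Nonempty := Finset.card_pos.1 (by omega)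
    have h1 := hG2 a b hab _ (hg a) _ (hg b) u (hS1 hu)
    have h2 := hS3 u hu
    rcases h1 with h | h <;> linarith [h2.1, h2.2]

/-- Compactness. -/
lemma compactness {d : ℕ} {ι : Type*} (lo hi : ι → Fin d → ℝ) (m C : ℕ) (hm : m ≤ d)
    (h : ∀ s : Finset ι, HitBy lo hi Finset.univ m s C) :
    ∃ (S : Fin C → Finset (Fin d)) (c : Fin C → Fin d → ℝ), (∀ n, (S n).card = m) ∧
      ∀ i, ∃ n, ∀ t ∈ S n, lo i t ≤ c n t ∧ c n t ≤ hi i t := by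
  classical
  letI : TopologicalSpace (Finset (Fin d)) := ⊥
  haveI : DiscreteTopology (Finset (Fin d)) := ⟨rfl⟩
  obtain ⟨S0, hS0⟩ : ∃ S0 : Finset (Fin d), S0.card = m := by
    obtain ⟨S, -, hS⟩ := Finset.exists_subset_card_eq (s := (Finset.univ : Finset (Fin d)))
      (n := m) (by simpa using hm)
    exact ⟨S, hS⟩
  let K : ι → Set (Fin C → Finset (Fin d) × (Fin d → EReal)) := fun i =>
    {x | ∃ n, (x n).1.card = m ∧
      ∀ t, t ∈ (x n).1 → ((lo i t : EReal) ≤ (x n).2 t ∧ (x n).2 t ≤ (hi i t : EReal))}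
  have hclosed : ∀ i, IsClosed (K i) := by
    intro i
    have : K i = ⋃ n, ({x | (x n).1.card = m} ∩ ⋂ t, ({x | t ∉ (x n).1} ∪
        {x | (lo i t : EReal) ≤ (x n).2 t ∧ (x n).2 t ≤ (hi i t : EReal)})) := by
      ext x
      simp only [K, Set.mem_setOf_eq, Set.mem_iUnion, Set.mem_inter_iff, Set.mem_iInter,
        Set.mem_union, imp_iff_not_or]
    rw [this]
    refine isClosed_iUnion_of_finite fun n => ?_
    have hc1 : Continuous fun x : Fin C → Finset (Fin d) × (Fin d → EReal) => (x n).1 := by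
      fun_prop
    have hc2 : ∀ t, Continuous fun x : Fin C → Finset (Fin d) × (Fin d → EReal) =>
        (x n).2 t := by
      intro t
      fun_prop
    refine IsClosed.inter ((isClosed_discrete {S : Finset (Fin d) | S.card = m}).preimage hc1)
      (isClosed_iInter fun t => IsClosed.union
        ((isClosed_discrete {S : Finset (Fin d) | t ∉ S}).preimage hc1) ?_)
    exact (isClosed_Icc (a := (lo i t : EReal)) (b := (hi i t : EReal))).preimage (hc2 t)
  have hne : (Set.univ ∩ ⋂ i, K i).Nonempty := by
    refine isCompact_univ.inter_iInter_nonempty K hclosed ?_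
    intro s
    obtain ⟨P, h1, h2, h3⟩ := h s
    let f : Fin C → Finset (Fin d) × (Fin d → ℝ) := fun n => P.toList.getD n (S0, 0)
    refine ⟨fun n => ((f n).1, fun t => ((f n).2 t : EReal)), Set.mem_univ _, ?_⟩
    simp only [Set.mem_iInter]
    intro i hi'
    obtain ⟨q, hq, hq'⟩ := h3 i hi'
    obtain ⟨n, hn, hnq⟩ := List.getElem_of_mem (Finset.mem_toList.2 hq)
    have hnC : n < C := lt_of_lt_of_le hn (by simpa using h1)
    have hf : f ⟨n, hnC⟩ = q := by
      simp only [f]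
      rw [List.getD_eq_getElem _ _ hn, hnq]
    refine ⟨⟨n, hnC⟩, ?_⟩
    simp only [hf]
    refine ⟨(h2 q hq).2, fun t ht => ?_⟩
    exact ⟨EReal.coe_le_coe_iff.2 (hq' t ht).1, EReal.coe_le_coe_iff.2 (hq' t ht).2⟩
  obtain ⟨x, -, hx⟩ := hne
  rw [Set.mem_iInter] at hx
  refine ⟨fun n => if (x n).1.card = m then (x n).1 else S0, fun n t => ((x n).2 t).toReal,
    ?_, ?_⟩
  · intro n
    dsimp only
    split_ifs with hh
    · exact hh
    · exact hS0
  · intro i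
    obtain ⟨n, hn, hn'⟩ := hx i
    refine ⟨n, ?_⟩
    simp only [hn, if_true]
    intro t ht
    obtain ⟨e1, e2⟩ := hn' t ht
    have hb : (x n).2 t ≠ ⊥ := fun hh => by simp [hh] at e1
    have htop : (x n).2 t ≠ ⊤ := fun hh => by simp [hh] at e2
    rw [← EReal.coe_toReal htop hb] at e1 e2
    exact ⟨EReal.coe_le_coe_iff.1 e1, EReal.coe_le_coe_iff.1 e2⟩

/-- **`(p,2)`-theorem for axis-parallel boxes and axis-parallel
`k`-flats.** For all `d ≥ 1`, `0 ≤ k < d` and `p ≥ 2` there is a positive integer `C`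
such that: if `F` is a family of axis-parallel boxes in `ℝ^d` in which among every `p`
distinct members some two can be intersected by a single axis-parallel `k`-flat, then all
boxes of `F` can be hit by at most `C` axis-parallel `k`-flats. -/
theorem stmt_17 (d k p : ℕ) (hd : 1 ≤ d) (hk : k < d) (hp : 2 ≤ p) :
    ∃ C : ℕ, 0 < C ∧
      ∀ F : Set (Set (EuclideanSpace ℝ (Fin d))),
        (∀ B ∈ F, IsBox B) →
        (∀ G : Finset (Set (EuclideanSpace ℝ (Fin d))), ↑G ⊆ F → G.card = p →
          ∃ B₁ ∈ G, ∃ B₂ ∈ G, B₁ ≠ B₂ ∧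
            ∃ W : Set (EuclideanSpace ℝ (Fin d)), IsAxisParallelKFlat k W ∧
              (B₁ ∩ W).Nonempty ∧ (B₂ ∩ W).Nonempty) →
        ∃ n : ℕ, n ≤ C ∧
          ∃ W : Fin n → Set (EuclideanSpace ℝ (Fin d)),
            (∀ m, IsAxisParallelKFlat k (W m)) ∧
            ∀ B ∈ F, ∃ m, (B ∩ W m).Nonempty := by
  classical
  obtain ⟨C, hC⟩ := finite_version (d := d) p (d - k) Finset.univ (by simp)
  refine ⟨C + 1, Nat.succ_pos _, fun F hF hG => ?_⟩
  choose lo hi hle hB using fun B : F => hF B.1 B.2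
  have hP : ∀ s : Finset F, PGood lo hi Finset.univ (d - k) p s := by
    intro s G _ hcard
    obtain ⟨B₁, h1, B₂, h2, hne, W, ⟨J, c, hJ, rfl⟩, ⟨x, hx1, hx2⟩, ⟨y, hy1, hy2⟩⟩ :=
      hG (G.map (Function.Embedding.subtype _))
        (by
          intro B hB'
          obtain ⟨b, -, rfl⟩ := Finset.mem_map.1 (Finset.mem_coe.1 hB')
          exact b.2)
        (by simpa using hcard)
    obtain ⟨b₁, hb₁, rfl⟩ := Finset.mem_map.1 h1
    obtain ⟨b₂, hb₂, rfl⟩ := Finset.mem_map.1 h2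
    refine ⟨b₁, hb₁, b₂, hb₂, fun h => hne (by rw [h]), Jᶜ, Finset.subset_univ _, ?_, ?_⟩
    · rw [Finset.card_compl, hJ, Fintype.card_fin]
    · intro t ht
      have ht' : t ∉ J := by simpa using ht
      simp only [Function.Embedding.subtype_apply] at hx1 hy1
      rw [hB b₁] at hx1
      rw [hB b₂] at hy1
      have e1 := hx1 t
      have e2 := hy1 t
      have e3 := hx2 t ht'
      have e4 := hy2 t ht'
      rw [e3] at e1
      rw [e4] at e2
      exact ⟨e1.1.trans e2.2, e2.1.trans e1.2⟩
  obtain ⟨S, c, hS, hit⟩ := compactness lo hi (d - k) C (Nat.sub_le _ _)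
    (fun s => hC F lo hi hle s (hP s))
  refine ⟨C, Nat.le_succ _, fun n => {x | ∀ j ∉ (S n)ᶜ, x j = c n j}, ?_, ?_⟩
  · intro n
    refine ⟨(S n)ᶜ, c n, ?_, rfl⟩
    rw [Finset.card_compl, hS, Fintype.card_fin]
    omega
  · intro B hBF
    obtain ⟨n, hn⟩ := hit ⟨B, hBF⟩
    refine ⟨n, WithLp.toLp 2 (fun t => if t ∈ S n then c n t else lo ⟨B, hBF⟩ t), ?_, ?_⟩
    · have := hB ⟨B, hBF⟩
      refine this.symm.subset ?_
      intro t
      by_cases ht : t ∈ S n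
      · simpa [ht] using hn t ht
      · simpa [ht] using hle ⟨B, hBF⟩ t
    · intro j hj
      have hj' : j ∈ S n := by simpa using hj
      simp [hj']
end

section
/- For every integer d ≥ 1 there exists a positive integer N such that every family of N pairwise distinct axis-parallel boxes in ℝ^d contains three pairwise distinct boxes B_1, B_2, B_3 with B_1 ∩ B_3 ⊆ B_2. -/
/-- A Ramsey-type lemma: a directed colouring of pairs with finitely many colours has
`x, y, z` with `col x y = col y z`, on every large enough set. -/
theorem ramsey_aux {α C : Type*} [DecidableEq α] [DecidableEq C] (col : α → α → C) (n : ℕ) :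
    ∃ N : ℕ, ∀ (A : Finset C) (S : Finset α), A.card = n → N ≤ S.card →
      (∀ x ∈ S, ∀ y ∈ S, x ≠ y → col x y ∈ A) →
      ∃ x ∈ S, ∃ y ∈ S, ∃ z ∈ S, x ≠ y ∧ x ≠ z ∧ y ≠ z ∧ col x y = col y z := by
  induction n with
  | zero =>
    refine ⟨2, fun A S hA hS h => ?_⟩
    obtain ⟨x, hx, y, hy, hxy⟩ := Finset.one_lt_card.1 hS
    have := h x hx y hy hxy
    rw [Finset.card_eq_zero] at hA
    simp [hA] at this
  | succ n ih =>
    obtain ⟨N, hN⟩ := ih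
    refine ⟨(n + 1) * N + 2, fun A S hA hS h => ?_⟩
    obtain ⟨x, hx⟩ : S.Nonempty := Finset.card_pos.1 (by omega)
    have hc : A.card * N < (S.erase x).card := by
      rw [Finset.card_erase_of_mem hx, hA]; omega
    obtain ⟨c, hcA, hcard⟩ := Finset.exists_lt_card_fiber_of_mul_lt_card_of_maps_to
      (f := fun y => col x y)
      (fun y hy => h x hx y (Finset.mem_of_mem_erase hy) (Finset.ne_of_mem_erase hy).symm) hc
    by_cases hyz : ∃ y ∈ (S.erase x).filter (fun y => col x y = c),
        ∃ z ∈ (S.erase x).filter (fun y => col x y = c), y ≠ z ∧ col y z = c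
    · obtain ⟨y, hy, z, hz, hne, hcol⟩ := hyz
      simp only [Finset.mem_filter, Finset.mem_erase] at hy hz
      exact ⟨x, hx, y, hy.1.2, z, hz.1.2, hy.1.1.symm, hz.1.1.symm, hne, hy.2.trans hcol.symm⟩
    · push Not at hyz
      obtain ⟨x', hx', y', hy', z', hz', h'⟩ := hN (A.erase c)
        ((S.erase x).filter (fun y => col x y = c))
        (by rw [Finset.card_erase_of_mem hcA, hA]; rfl) hcard.le
        (fun y hy z hz hne => by
          refine Finset.mem_erase.2 ⟨hyz y hy z hz hne, ?_⟩
          simp only [Finset.mem_filter, Finset.mem_erase] at hy hz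
          exact h y hy.1.2 z hz.1.2 hne)
      simp only [Finset.mem_filter, Finset.mem_erase] at hx' hy' hz'
      exact ⟨x', hx'.1.2, y', hy'.1.2, z', hz'.1.2, h'⟩

theorem stmt_18 (d : ℕ) (hd : 1 ≤ d) :
    ∃ N : ℕ, 0 < N ∧
      ∀ S : Finset (Set (EuclideanSpace ℝ (Fin d))),
        (∀ B ∈ S, IsBox B) → S.card = N →
        ∃ B₁ ∈ S, ∃ B₂ ∈ S, ∃ B₃ ∈ S,
          B₁ ≠ B₂ ∧ B₁ ≠ B₃ ∧ B₂ ≠ B₃ ∧ B₁ ∩ B₃ ⊆ B₂ := by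
  classical
  have key : ∀ B : Set (EuclideanSpace ℝ (Fin d)), ∃ a b : Fin d → ℝ,
      IsBox B → B = {x | ∀ i, x i ∈ Set.Icc (a i) (b i)} := by
    intro B
    by_cases hB : IsBox B
    · obtain ⟨a, b, -, h⟩ := hB
      exact ⟨a, b, fun _ => h⟩
    · exact ⟨0, 0, fun h => absurd h hB⟩
  choose a b hab using key
  let col : Set (EuclideanSpace ℝ (Fin d)) → Set (EuclideanSpace ℝ (Fin d)) →
      (Fin d → Bool × Bool) :=
    fun X Y i => (decide (a X i ≤ a Y i), decide (b X i ≤ b Y i))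
  obtain ⟨N, hN⟩ := ramsey_aux col (Finset.univ : Finset (Fin d → Bool × Bool)).card
  refine ⟨N + 1, by omega, fun S hS hcard => ?_⟩
  obtain ⟨X, hX, Y, hY, Z, hZ, h1, h2, h3, hcol⟩ :=
    hN Finset.univ S rfl (by omega) (fun _ _ _ _ _ => Finset.mem_univ _)
  refine ⟨X, hX, Y, hY, Z, hZ, h1, h2, h3, ?_⟩
  rintro p ⟨hpX, hpZ⟩
  rw [hab X (hS X hX)] at hpX
  rw [hab Z (hS Z hZ)] at hpZ
  rw [hab Y (hS Y hY)]
  intro i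
  obtain ⟨x1, x2⟩ := hpX i
  obtain ⟨z1, z2⟩ := hpZ i
  have hi := congrFun hcol i
  simp only [col, Prod.mk.injEq, decide_eq_decide] at hi
  obtain ⟨ha, hb⟩ := hi
  constructor
  · by_cases h : a X i ≤ a Y i
    · exact (ha.1 h).trans z1
    · exact (not_le.1 h).le.trans x1
  · by_cases h : b X i ≤ b Y i
    · exact x2.trans h
    · exact z2.trans (not_le.1 (fun h' => h (hb.2 h'))).le
end

section
/- Let d ≥ 1, let S be a finite family of n pairwise distinct axis-parallel boxes in ℝ^d, and let α be a real number with 1 - 1/d² < α ≤ 1. If the number of unordered pairs of distinct boxes of S that intersect is at least α·(n choose 2), then there exists a subfamily of S of size at least (1 - d·√(1-α))·n all of whose members have a common point. -/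
open Classical in
theorem interval_count {ι : Type*} (a b : ι → ℝ) (m : ℕ) (S : Finset ι)
    (hab : ∀ i ∈ S, a i ≤ b i)
    (hm : ∀ x, (S.filter (fun i => a i ≤ x ∧ x ≤ b i)).card ≤ m) :
    (S.card - m) * (S.card - m + 1) ≤
      2 * ((S ×ˢ S).filter (fun p => b p.1 < a p.2)).card := by
  induction S using Finset.induction_on_min_value b with
  | empty => simp
  | insert i s his hmin ih =>
    have ih' := ih (fun j hj => hab j (Finset.mem_insert_of_mem hj)) (fun x =>
      (Finset.card_le_card (Finset.filter_subset_filter _ (Finset.subset_insert i s))).trans (hm x))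
    have hai := hab i (Finset.mem_insert_self i s)
    have h1 : (insert i s).card ≤ (s.filter (fun j => b i < a j)).card + m := by
      have : insert i s ⊆ s.filter (fun j => b i < a j) ∪
          (insert i s).filter (fun j => a j ≤ b i ∧ b i ≤ b j) := by
        intro j hj
        rcases Finset.mem_insert.1 hj with rfl | hjs
        · simp [hai]
        · by_cases h : b i < a j
          · simp [hjs, h]
          · simp [hjs, hmin j hjs, not_lt.1 h]
      exact (Finset.card_le_card this).trans ((Finset.card_union_le _ _).trans
        (Nat.add_le_add_left (hm (b i)) _))
    have h2 : ((s ×ˢ s).filter (fun p => b p.1 < a p.2)).card +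
        (s.filter (fun j => b i < a j)).card ≤
        ((insert i s ×ˢ insert i s).filter (fun p => b p.1 < a p.2)).card := by
      rw [← Finset.card_image_of_injective (s.filter (fun j => b i < a j))
        (f := fun j => (i, j)) (fun x y h => (Prod.mk.inj h).2), ← Finset.card_union_of_disjoint]
      · apply Finset.card_le_card
        intro p hp
        simp only [Finset.mem_union, Finset.mem_filter, Finset.mem_product, Finset.mem_image,
          Finset.mem_insert] at hp ⊢
        rcases hp with hp | ⟨j, hj, rfl⟩
        · tauto
        · tauto
      · rw [Finset.disjoint_left]
        intro p hp hq
        simp only [Finset.mem_filter, Finset.mem_product, Finset.mem_image] at hp hq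
        obtain ⟨j, hj, rfl⟩ := hq
        exact his hp.1.1
    rw [Finset.card_insert_of_notMem his] at h1 ⊢
    rcases Nat.lt_or_ge s.card m with h | h
    · have : s.card + 1 - m = 0 := by omega
      simp [this]
    · obtain ⟨k, hk⟩ := Nat.exists_eq_add_of_le h
      have e1 : s.card - m = k := by omega
      have e2 : s.card + 1 - m = k + 1 := by omega
      rw [e1] at ih'
      rw [e2]
      have : k + 1 ≤ (s.filter (fun j => b i < a j)).card := by omega
      nlinarith

open Classical in
theorem interval_point {ι : Type*} (a b : ι → ℝ) (S : Finset ι)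
    (hab : ∀ i ∈ S, a i ≤ b i) :
    ∃ x, (S.filter (fun i => ¬ (a i ≤ x ∧ x ≤ b i))).card ^ 2 ≤
      2 * ((S ×ˢ S).filter (fun p => b p.1 < a p.2)).card := by
  let f : ℝ → ℕ := fun x => (S.filter (fun i => ¬ (a i ≤ x ∧ x ≤ b i))).card
  let x := Function.argmin f
  refine ⟨x, ?_⟩
  have hx : ∀ y, f x ≤ f y := fun y => Function.argmin_le f y
  have hs : ∀ y, (S.filter (fun i => a i ≤ y ∧ y ≤ b i)).card + f y = S.card :=
    fun y => Finset.card_filter_add_card_filter_not _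
  have := interval_count a b (S.card - f x) S hab (fun y => by
    have := hx y; have := hs y; omega)
  have h3 : S.card - (S.card - f x) = f x := by have := hs x; omega
  rw [h3] at this
  change f x ^ 2 ≤ _
  nlinarith

/-- **fractional Helly theorem of Bárány et al. for axis-parallel boxes.**
Let `S` be a finite family of `n` pairwise distinct axis-parallel boxes in `ℝ^d` and
`1 - 1/d² < α ≤ 1`. If at least `α·(n choose 2)` of the unordered pairs of distinct boxes
of `S` intersect, then some subfamily of `S` of size at least `(1 - d·√(1-α))·n` has a
common point. -/
theorem stmt_19 (d : ℕ) (hd : 1 ≤ d)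
    (S : Finset (Set (EuclideanSpace ℝ (Fin d))))
    (hbox : ∀ B ∈ S, IsBox B)
    (n : ℕ) (hn : n = S.card)
    (α : ℝ) (hα₁ : 1 - 1 / (d : ℝ) ^ 2 < α) (hα₂ : α ≤ 1)
    (hpairs : α * (n.choose 2 : ℝ) ≤
      (({e : Finset (Set (EuclideanSpace ℝ (Fin d))) |
          e ⊆ S ∧ e.card = 2 ∧ ∃ x : EuclideanSpace ℝ (Fin d), ∀ B ∈ e, x ∈ B}).ncard : ℝ)) :
    ∃ T : Finset (Set (EuclideanSpace ℝ (Fin d))), T ⊆ S ∧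
      (1 - (d : ℝ) * Real.sqrt (1 - α)) * (n : ℝ) ≤ (T.card : ℝ) ∧
      ∃ x : EuclideanSpace ℝ (Fin d), ∀ B ∈ T, x ∈ B := by
  classical
  choose! a b hab hB using hbox
  set G : Set (Finset (Set (EuclideanSpace ℝ (Fin d)))) := {e | e ⊆ S ∧ e.card = 2 ∧
    ∃ x : EuclideanSpace ℝ (Fin d), ∀ B ∈ e, x ∈ B} with hG
  have hGfin : G.Finite := (Finset.finite_toSet S.powerset).subset (fun e he => by
    simpa using he.1)
  have key : ∀ i : Fin d, ((S ×ˢ S).filter (fun p => b p.1 i < a p.2 i)).card + G.ncard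
      ≤ n.choose 2 := by
    intro i
    rw [Set.ncard_eq_toFinset_card G hGfin, hn, ← Finset.card_powersetCard]
    have hinj : Set.InjOn (fun p : Set (EuclideanSpace ℝ (Fin d)) × Set (EuclideanSpace ℝ (Fin d))
        => ({p.1, p.2} : Finset (Set (EuclideanSpace ℝ (Fin d)))))
        ((S ×ˢ S).filter (fun p => b p.1 i < a p.2 i) : Finset _) := by
      rintro ⟨p, q⟩ hp ⟨r, s⟩ hr h
      simp only [Finset.coe_filter, Finset.mem_product, Set.mem_ofPred_eq] at hp hr
      have hset : ({p, q} : Set (Set (EuclideanSpace ℝ (Fin d)))) = {r, s} := by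
        have := congrArg (fun t : Finset (Set (EuclideanSpace ℝ (Fin d))) =>
          (t : Set (Set (EuclideanSpace ℝ (Fin d))))) h
        simpa using this
      rcases Set.pair_eq_pair_iff.1 hset with ⟨rfl, rfl⟩ | ⟨rfl, rfl⟩
      · rfl
      · have := hab p hp.1.1 i
        have := hab q hp.1.2 i
        linarith [hp.2, hr.2]
    rw [← Finset.card_image_of_injOn hinj, ← Finset.card_union_of_disjoint]
    · apply Finset.card_le_card
      intro e he
      rw [Finset.mem_powersetCard]
      rcases Finset.mem_union.1 he with he | he
      · obtain ⟨⟨p, q⟩, hp, rfl⟩ := Finset.mem_image.1 he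
        simp only [Finset.mem_filter, Finset.mem_product] at hp
        refine ⟨?_, Finset.card_pair ?_⟩
        · intro x hx
          simp only [Finset.mem_insert, Finset.mem_singleton] at hx
          rcases hx with rfl | rfl
          · exact hp.1.1
          · exact hp.1.2
        · intro hpq
          have hpq' : p = q := hpq
          subst hpq'
          linarith [hp.2, hab p hp.1.1 i]
      · rw [Set.Finite.mem_toFinset] at he
        exact ⟨he.1, he.2.1⟩
    · rw [Finset.disjoint_left]
      intro e he hg
      obtain ⟨⟨p, q⟩, hp, rfl⟩ := Finset.mem_image.1 he
      simp only [Finset.mem_filter, Finset.mem_product] at hp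
      rw [Set.Finite.mem_toFinset] at hg
      obtain ⟨-, -, x, hx⟩ := hg
      have h1 := hx p (by simp)
      have h2 := hx q (by simp)
      rw [hB p hp.1.1] at h1
      rw [hB q hp.1.2] at h2
      linarith [hp.2, (h1 i).2, (h2 i).1]
  choose x hx using fun i : Fin d => interval_point (fun B => a B i) (fun B => b B i) S
    (fun B hBS => hab B hBS i)
  have hk : ∀ i : Fin d, ((S.filter (fun B => ¬ (a B i ≤ x i ∧ x i ≤ b B i))).card : ℝ) ≤
      Real.sqrt (1 - α) * n := by
    intro i
    have h1 : ((S.filter (fun B => ¬ (a B i ≤ x i ∧ x i ≤ b B i))).card : ℝ) ^ 2 ≤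
      2 * (((S ×ˢ S).filter (fun p => b p.1 i < a p.2 i)).card : ℝ) := by exact_mod_cast hx i
    have h2 : (((S ×ˢ S).filter (fun p => b p.1 i < a p.2 i)).card : ℝ) + (G.ncard : ℝ)
      ≤ (n.choose 2 : ℝ) := by exact_mod_cast key i
    have h3 : (n.choose 2 : ℝ) * 2 ≤ (n : ℝ) ^ 2 := by
      rw [Nat.cast_choose_two]
      have : (0 : ℝ) ≤ n := Nat.cast_nonneg n
      nlinarith
    have h4 : (0 : ℝ) ≤ 1 - α := by linarith
    apply le_of_sq_le_sq _ (by positivity)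
    rw [mul_pow, Real.sq_sqrt h4]
    nlinarith [mul_le_mul_of_nonneg_left h3 h4]
  refine ⟨S.filter (fun B => WithLp.toLp 2 x ∈ B), Finset.filter_subset _ _, ?_,
    WithLp.toLp 2 x, fun B hB' => (Finset.mem_filter.1 hB').2⟩
  have hsub : S.filter (fun B => ¬ WithLp.toLp 2 x ∈ B) ⊆
      Finset.univ.biUnion (fun i : Fin d =>
        S.filter (fun B => ¬ (a B i ≤ x i ∧ x i ≤ b B i))) := by
    intro B hB'
    obtain ⟨hBS, hxB⟩ := Finset.mem_filter.1 hB'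
    rw [hB B hBS] at hxB
    simp only [Set.mem_ofPred_eq, not_forall] at hxB
    obtain ⟨i, hi⟩ := hxB
    exact Finset.mem_biUnion.2 ⟨i, Finset.mem_univ i, Finset.mem_filter.2 ⟨hBS, hi⟩⟩
  have h5 : ((S.filter (fun B => ¬ WithLp.toLp 2 x ∈ B)).card : ℝ) ≤
      d * (Real.sqrt (1 - α) * n) := by
    calc ((S.filter (fun B => ¬ WithLp.toLp 2 x ∈ B)).card : ℝ)
        ≤ ((∑ i : Fin d, (S.filter (fun B => ¬ (a B i ≤ x i ∧ x i ≤ b B i))).card : ℕ) : ℝ) := by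
          exact_mod_cast (Finset.card_le_card hsub).trans Finset.card_biUnion_le
      _ = ∑ i : Fin d, ((S.filter (fun B => ¬ (a B i ≤ x i ∧ x i ≤ b B i))).card : ℝ) := by
          push_cast; rfl
      _ ≤ ∑ _i : Fin d, Real.sqrt (1 - α) * n := Finset.sum_le_sum (fun i _ => hk i)
      _ = d * (Real.sqrt (1 - α) * n) := by simp
  have h6 : ((S.filter (fun B => WithLp.toLp 2 x ∈ B)).card : ℝ) +
      ((S.filter (fun B => ¬ WithLp.toLp 2 x ∈ B)).card : ℝ) = n := by
    rw [hn]
    exact_mod_cast Finset.card_filter_add_card_filter_not _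
  linarith
end
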